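/- The multiplication map [A] ⊗ α ⊗ [B] ↦ E_A ⋆ K_α ⋆ F_B defines an isomorphism of C-vector spaces H(A) ⊗_C C[K(R)] ⊗_C H(A) → DH_red(R). -/

import Mathlib

open CategoryTheory CategoryTheory.Limits Opposite

noncomputable section

universe u

variable (k : Type) [Field k] [Fintype k]
variable (R : Type u) [SmallCategory R] [Abelian R] [Linear k R] [EnoughProjectives R]

/-- The objects `A` of `R` such that `Hom(M, A)` is a finite set for every `M`. -/
def IsFinHom (A : R) : Prop := ∀ M : R, Finite (M ⟶ A)

/-- The Euler form `⟨M,A⟩ = dim Hom(M,A) - dim Ext¹(M,A)`. -/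
def euler (M A : R) : ℤ :=
  (Module.finrank k (M ⟶ A) : ℤ) -
    (Module.finrank k (((_root_.Ext k R 1).obj (op M)).obj A) : ℤ)

/-- The set of relations defining the Grothendieck group of `R`. -/
def sesSet : Set (FreeAbelianGroup R) :=
  {x | ∃ S : ShortComplex R, S.ShortExact ∧
    x = FreeAbelianGroup.of S.X₂ - FreeAbelianGroup.of S.X₁ - FreeAbelianGroup.of S.X₃}

/-- The Grothendieck group `K(R)`. -/
abbrev K0 := FreeAbelianGroup R ⧸ AddSubgroup.closure (sesSet R)

/-- The class of an object in `K(R)`. -/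
def K0.cls (X : R) : K0 R := QuotientAddGroup.mk (FreeAbelianGroup.of X)

/-- The set of relations defining the Grothendieck group of the subcategory `A`. -/
def sesSetA : Set (FreeAbelianGroup {A : R // IsFinHom R A}) :=
  {x | ∃ (S : ShortComplex R) (h1 : IsFinHom R S.X₁) (h2 : IsFinHom R S.X₂)
      (h3 : IsFinHom R S.X₃), S.ShortExact ∧
    x = FreeAbelianGroup.of ⟨S.X₂, h2⟩ - FreeAbelianGroup.of ⟨S.X₁, h1⟩ -
      FreeAbelianGroup.of ⟨S.X₃, h3⟩}

/-- The Grothendieck group `K(A)`. -/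
abbrev KA := FreeAbelianGroup {A : R // IsFinHom R A} ⧸ AddSubgroup.closure (sesSetA R)

/-- The class of an object of `A` in `K(A)`. -/
def KA.cls (A : {A : R // IsFinHom R A}) : KA R := QuotientAddGroup.mk (FreeAbelianGroup.of A)

/-- `R` is hereditary, i.e. of global dimension at most 1. -/
def Hereditary : Prop :=
  ∀ X Y : R, Subsingleton (((_root_.Ext k R 2).obj (op X)).obj Y)

/-- Condition (c): cancellation for projectives. -/
def CondC : Prop :=
  ∀ P Q M : R, Projective P → Projective Q → Projective M →
    Nonempty ((M ⊞ P) ≅ (M ⊞ Q)) → Nonempty (P ≅ Q)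

/-- Condition (d): every element of `K(R)` is a `ℚ`-linear combination of classes of
objects of `A`. -/
def CondD : Prop :=
  ∀ x : K0 R, ∃ n : ℕ, n ≠ 0 ∧ (n : ℤ) • x ∈
    AddSubgroup.closure (Set.range fun A : {A : R // IsFinHom R A} => K0.cls R A.1)

/-- Condition (e). -/
def CondE : Prop :=
  ∀ A B : R, IsFinHom R A → IsFinHom R B → K0.cls R A = K0.cls R B →
    ∀ P : R, Projective P → Nat.card (P ⟶ A) = Nat.card (P ⟶ B)

structure Z2Cx where
  X0 : R
  X1 : R
  d0 : X0 ⟶ X1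
  d1 : X1 ⟶ X0
  d01 : d0 ≫ d1 = 0
  d10 : d1 ≫ d0 = 0

namespace Z2Cx

variable {R}

/-- Morphisms of `ℤ/2`-graded complexes. -/
@[ext] structure Hom (M N : Z2Cx R) where
  f0 : M.X0 ⟶ N.X0
  f1 : M.X1 ⟶ N.X1
  comm0 : M.d0 ≫ f1 = f0 ≫ N.d0
  comm1 : M.d1 ≫ f0 = f1 ≫ N.d1

instance : CategoryStruct (Z2Cx R) where
  Hom := Hom
  id M := ⟨𝟙 _, 𝟙 _, by simp, by simp⟩
  comp {M N P} f g := ⟨f.f0 ≫ g.f0, f.f1 ≫ g.f1, by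
      rw [← Category.assoc, f.comm0, Category.assoc, g.comm0, Category.assoc], by
      rw [← Category.assoc, f.comm1, Category.assoc, g.comm1, Category.assoc]⟩

@[simp] lemma id_f0 (M : Z2Cx R) : (𝟙 M : Hom M M).f0 = 𝟙 M.X0 := rfl
@[simp] lemma id_f1 (M : Z2Cx R) : (𝟙 M : Hom M M).f1 = 𝟙 M.X1 := rfl
@[simp] lemma comp_f0 {M N P : Z2Cx R} (f : M ⟶ N) (g : N ⟶ P) :
    (f ≫ g).f0 = Hom.f0 f ≫ Hom.f0 g := rfl
@[simp] lemma comp_f1 {M N P : Z2Cx R} (f : M ⟶ N) (g : N ⟶ P) :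
    (f ≫ g).f1 = Hom.f1 f ≫ Hom.f1 g := rfl

instance : Category (Z2Cx R) where
  id_comp f := by apply Hom.ext <;> simp
  comp_id f := by apply Hom.ext <;> simp
  assoc f g h := by apply Hom.ext <;> simp

variable (R)

/-- The two-term complex `C_f` associated to a morphism `f`, concentrated so that
`X1 = P`, `X0 = Q`, `d1 = f`, `d0 = 0`. -/
def Cf {P Q : R} (f : P ⟶ Q) : Z2Cx R := ⟨Q, P, 0, f, by simp, by simp⟩

/-- The shift involution `†`: it interchanges the gradings and negates the differentials. -/
def dagger (M : Z2Cx R) : Z2Cx R :=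
  ⟨M.X1, M.X0, -M.d1, -M.d0, by simp [M.d10], by simp [M.d01]⟩

/-- The acyclic complex `K_P` with `d1 = 𝟙 P` and `d0 = 0`. -/
def KP (P : R) : Z2Cx R := ⟨P, P, 0, 𝟙 P, by simp, by simp⟩

/-- Direct sum of `ℤ/2`-graded complexes. -/
def dsum (M N : Z2Cx R) : Z2Cx R where
  X0 := M.X0 ⊞ N.X0
  X1 := M.X1 ⊞ N.X1
  d0 := biprod.map M.d0 N.d0
  d1 := biprod.map M.d1 N.d1
  d01 := by ext <;> simp [M.d01, N.d01]
  d10 := by ext <;> simp [M.d10, N.d10]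

/-- Degree `0` homology of a `ℤ/2`-graded complex. -/
def H0 (M : Z2Cx R) : R := (ShortComplex.mk M.d1 M.d0 M.d10).homology

/-- Degree `1` homology of a `ℤ/2`-graded complex. -/
def H1 (M : Z2Cx R) : R := (ShortComplex.mk M.d0 M.d1 M.d01).homology

/-- The homology complex `H•(M•)`, with zero differentials. -/
def Hcx (M : Z2Cx R) : Z2Cx R := ⟨H0 R M, H1 R M, 0, 0, by simp, by simp⟩

/-- A complex is acyclic if its homology vanishes. -/
def Acyclic (M : Z2Cx R) : Prop := IsZero (H0 R M) ∧ IsZero (H1 R M)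

end Z2Cx

namespace Z2Cx

variable {R}

/-- A short exact sequence of `ℤ/2`-graded complexes, exhibiting an extension of `M` by `N`
(short exactness of a sequence of complexes is componentwise short exactness). -/
structure ExtSES (M N : Z2Cx R) where
  E : Z2Cx R
  i : N ⟶ E
  p : E ⟶ M
  w0 : Hom.f0 i ≫ Hom.f0 p = 0
  w1 : Hom.f1 i ≫ Hom.f1 p = 0
  ex0 : (ShortComplex.mk (Hom.f0 i) (Hom.f0 p) w0).ShortExact
  ex1 : (ShortComplex.mk (Hom.f1 i) (Hom.f1 p) w1).ShortExact

/-- Equivalence of extensions of complexes. -/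
def ExtEquiv (M N : Z2Cx R) (s t : ExtSES M N) : Prop :=
  ∃ φ : s.E ≅ t.E, s.i ≫ φ.hom = t.i ∧ φ.hom ≫ t.p = s.p

/-- The set `Ext¹_{C(R)}(M•, N•)` of equivalence classes of extensions of `M•` by `N•`
in the category of `ℤ/2`-graded complexes over `R`. -/
def ExtCl (M N : Z2Cx R) := Quot (ExtEquiv M N)

end Z2Cx

/-- Complexes of projectives with homology in the subcategory `A`, i.e. objects
of `C_fin(P)`. -/
def FinCx (M : Z2Cx R) : Prop :=
  Projective M.X0 ∧ Projective M.X1 ∧ IsFinHom R (Z2Cx.H0 R M) ∧ IsFinHom R (Z2Cx.H1 R M)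

attribute [local instance] Classical.propDecidable

/-- The class `[M•] = [M₀] - [M₁]` in `K(R)` of a `ℤ/2`-graded complex. -/
def clsOf (M : Z2Cx R) : K0 R := K0.cls R M.X0 - K0.cls R M.X1

/-- Isomorphism of `ℤ/2`-graded complexes, as a relation. -/
def cxRel (M N : Z2Cx R) : Prop := Nonempty (M ≅ N)

/-- Isomorphism classes of `ℤ/2`-graded complexes. -/
def CxCls := Quot (cxRel R)

/-- The isomorphism class of a complex. -/
def ccls (M : Z2Cx R) : CxCls R := Quot.mk _ M

/-- The isomorphism class of the middle term of an extension class. -/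
def extMid {M N : Z2Cx R} : Z2Cx.ExtCl M N → CxCls R :=
  Quot.lift (fun s => ccls R s.E) (fun s t h => by
    obtain ⟨φ, -, -⟩ := h
    exact Quot.sound ⟨φ⟩)

/-- `|Ext¹_{C(R)}(M•,N•)_{P•}|` : the number of extension classes of `M•` by `N•` whose
middle term has isomorphism class `c`. -/
def extCount (M N : Z2Cx R) (c : CxCls R) : ℕ :=
  Nat.card {x : Z2Cx.ExtCl M N // extMid R x = c}

/-- The `ℚ`-valued extension of the Euler form to `K(R) × K(R)`
(which exists by condition (d)). -/
structure EulerData where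
  eQ : K0 R →+ K0 R →+ ℚ
  compat : ∀ (M A : R), IsFinHom R A →
    eQ (K0.cls R M) (K0.cls R A) = euler k R M A

/-- A choice, for every complex of projectives `M•`, of the classes `[M₁⁺]` and `[M₀⁻]`
of the components of the canonical decomposition `M• = M•⁺ ⊕ M•⁻ = C_f ⊕ C_g^†`. -/
structure DecData where
  cplus : Z2Cx R → K0 R
  cminus : Z2Cx R → K0 R
  spec : ∀ M : Z2Cx R, Projective M.X0 → Projective M.X1 →
    ∃ (P Q P' Q' : R) (f : P ⟶ Q) (g : P' ⟶ Q'),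
      Projective P ∧ Projective Q ∧ Projective P' ∧ Projective Q' ∧
      Mono f ∧ Mono g ∧
      Nonempty (M ≅ Z2Cx.dsum R (Z2Cx.Cf R f) (Z2Cx.dagger R (Z2Cx.Cf R g))) ∧
      cplus M = K0.cls R P ∧ cminus M = K0.cls R P'

variable {k R}

/-- `μ(M•,N•) = Σ_{i,j} ⟨[Mᵢ^{ε(j)}], [N_{j+1}^{ε(i)}]⟩`. -/
def mu (ed : EulerData k R) (dd : DecData R) (M N : Z2Cx R) : ℚ :=
  ed.eQ (K0.cls R M.X0 - dd.cminus M) (dd.cplus N) +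
    ed.eQ (dd.cplus M) (K0.cls R N.X1 - dd.cplus N) +
    ed.eQ (dd.cminus M) (K0.cls R N.X0 - dd.cminus N) +
    ed.eQ (K0.cls R M.X1 - dd.cplus M) (dd.cminus N)

/-- `h(M•,N•) = q^{μ(M•,N•)} ⬝ |Hom_{C(R)}(H•(M•), H•(N•))|`. -/
def hVal (ed : EulerData k R) (dd : DecData R) (M N : Z2Cx R) : ℝ :=
  (Fintype.card k : ℝ) ^ ((mu ed dd M N : ℚ) : ℝ) *
    (Nat.card (Z2Cx.Hcx R M ⟶ Z2Cx.Hcx R N) : ℝ)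

/-- The structure constants of the Hall algebra `H(C_fin(P))`:
the coefficient of the basis element `c` in `[M•] ⋆ [N•]`. -/
def hallCoeff (v : ℝ) (ed : EulerData k R) (dd : DecData R) (M N : Z2Cx R)
    (c : CxCls R) : ℂ :=
  (((v ^ (((ed.eQ (K0.cls R M.X0) (K0.cls R N.X0) +
      ed.eQ (K0.cls R M.X1) (K0.cls R N.X1) : ℚ)) : ℝ) *
    (extCount R M N c : ℝ) / hVal ed dd M N : ℝ)) : ℂ)

variable (k R)

/-- Objects of `C_fin(P)`. -/
def FCx := {M : Z2Cx R // FinCx R M}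

/-- Isomorphism classes of objects of `C_fin(P)`. -/
def FCls := Quot (fun M N : FCx R => Nonempty (M.1 ≅ N.1))

/-- The isomorphism class of an object of `C_fin(P)`. -/
def fcls (M : FCx R) : FCls R := Quot.mk _ M

/-- Comparison of isomorphism classes in `C_fin(P)` with isomorphism classes of
arbitrary complexes. -/
def fc2c : FCls R → CxCls R :=
  Quot.lift (fun M => ccls R M.1) (fun _ _ h => Quot.sound h)

/-- The symmetrized Euler form `(α,β) = ⟨α,β⟩ + ⟨β,α⟩`. -/
def sForm (ed : EulerData k R) (a b : K0 R) : ℚ := ed.eQ a b + ed.eQ b a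

open ZeroObject in
/-- The zero complex. -/
def zeroCx : Z2Cx R := ⟨0, 0, 0, 0, by simp, by simp⟩

/-- All the data constituting the localized Hall algebra `DH(R)`:
the Hall algebra `H(C_fin(P))` (a free `ℂ`-module on the isomorphism classes of
`C_fin(P)`, with the Hall multiplication `mulH` determined by the structure constants
`hallCoeff`), and its localization `D` at the classes of acyclic complexes, together
with the elements `K_α ⋆ K_β^† = KK (α, β)` and the canonical map `loc`.  The axioms
express that `D` is precisely the localization of `H(C_fin(P))` at the classes of
acyclic complexes, with the `ℂ[K(R) × K(R)]`-bimodule structure of the paper. -/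
structure DHSetting where
  v : ℝ
  v_pos : 0 < v
  v_sq : v ^ 2 = (Fintype.card k : ℝ)
  ed : EulerData k R
  dd : DecData R
  /-- the Hall multiplication on `H(C_fin(P))` -/
  mulH : ((FCls R) →₀ ℂ) →ₗ[ℂ] ((FCls R) →₀ ℂ) →ₗ[ℂ] ((FCls R) →₀ ℂ)
  mulH_single : ∀ (M N : FCx R) (c : FCls R),
    (mulH (Finsupp.single (fcls R M) 1) (Finsupp.single (fcls R N) 1)) c
      = hallCoeff v ed dd M.1 N.1 (fc2c R c)
  /-- the carrier of the localized Hall algebra `DH(R)` -/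
  D : Type u
  [grp : AddCommGroup D]
  [mod : Module ℂ D]
  /-- the multiplication `⋆` of `DH(R)` -/
  mulD : D →ₗ[ℂ] D →ₗ[ℂ] D
  one : D
  one_mul : ∀ d, mulD one d = d
  mul_one : ∀ d, mulD d one = d
  /-- the canonical map `H(C_fin(P)) → DH(R)` -/
  loc : ((FCls R) →₀ ℂ) →ₗ[ℂ] D
  loc_one : ∀ h : FinCx R (zeroCx R),
    loc (Finsupp.single (fcls R ⟨zeroCx R, h⟩) 1) = one
  loc_mul : ∀ x y, mulD (loc x) (loc y) = loc (mulH x y)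
  /-- the elements `K_α ⋆ K_β^†` -/
  KK : K0 R × K0 R → D
  KK_zero : KK 0 = one
  KK_mul : ∀ a b, mulD (KK a) (KK b) = KK (a + b)
  KK_P : ∀ (P : R), Projective P → ∀ h : FinCx R (Z2Cx.KP R P),
    loc (Finsupp.single (fcls R ⟨Z2Cx.KP R P, h⟩) 1) = KK (K0.cls R P, 0)
  KK_Pd : ∀ (P : R), Projective P → ∀ h : FinCx R (Z2Cx.dagger R (Z2Cx.KP R P)),
    loc (Finsupp.single (fcls R ⟨Z2Cx.dagger R (Z2Cx.KP R P), h⟩) 1) = KK (0, K0.cls R P)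
  /-- the bimodule rule `(K_α ⋆ K_β^†) ⋆ [M•] = v^{(α-β,[M•])} [M•] ⋆ (K_α ⋆ K_β^†)` -/
  comm_rule : ∀ (a b : K0 R) (M : FCx R),
    mulD (KK (a, b)) (loc (Finsupp.single (fcls R M) 1)) =
      (((v ^ ((sForm k R ed (a - b) (clsOf R M.1) : ℚ) : ℝ) : ℝ) : ℂ)) •
        mulD (loc (Finsupp.single (fcls R M) 1)) (KK (a, b))
  /-- multiplication of elements in standard form is induced by the Hall multiplication -/
  mul_general : ∀ (x : (FCls R) →₀ ℂ) (M : FCx R) (a b a' b' : K0 R),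
    mulD (mulD (loc x) (KK (a, b))) (mulD (loc (Finsupp.single (fcls R M) 1)) (KK (a', b'))) =
      (((v ^ ((sForm k R ed (a - b) (clsOf R M.1) : ℚ) : ℝ) : ℝ) : ℂ)) •
        mulD (loc (mulH x (Finsupp.single (fcls R M) 1))) (KK (a + a', b + b'))
  /-- every element of the localization has the standard form `x ⋆ K_α ⋆ K_β^†` -/
  span : ∀ d : D, ∃ (x : (FCls R) →₀ ℂ) (a b : K0 R), d = mulD (loc x) (KK (a, b))
  /-- the kernel of the localization map is exactly the torsion with respect to the
  classes of acyclic complexes -/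
  loc_ker : ∀ x, loc x = 0 ↔ ∃ (K : Z2Cx R) (h : FinCx R K),
    Z2Cx.Acyclic R K ∧ mulH x (Finsupp.single (fcls R ⟨K, h⟩) 1) = 0

attribute [instance] DHSetting.grp DHSetting.mod

variable {k R}

/-- The element `E_{M•} = v^{⟨[M₁⁺]-[M₀⁻],[M•]⟩} K_{-[M₁⁺]} ⋆ K^†_{-[M₀⁻]} ⋆ [M•]`
of the localized Hall algebra. -/
def Eelt (S : DHSetting k R) (M : Z2Cx R) (h : FinCx R M) : S.D :=
  (((S.v ^ ((S.ed.eQ (S.dd.cplus M - S.dd.cminus M) (clsOf R M) : ℚ) : ℝ) : ℝ) : ℂ)) •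
    S.mulD (S.KK (-(S.dd.cplus M), -(S.dd.cminus M)))
      (S.loc (Finsupp.single (fcls R ⟨M, h⟩) 1))

variable (R)

/-- Isomorphism classes of objects of the subcategory `A`. -/
def IsoA := Quot (fun A B : {A : R // IsFinHom R A} => Nonempty (A.1 ≅ B.1))

variable {R}

open TensorProduct

/-- The two-sided ideal of `DH(R)` generated by the elements
`[K_P] ⋆ [K_P^†] - 1 = K_{[P]} ⋆ K^†_{[P]} - 1`, for `P ∈ P`; the reduced localized Hall
algebra is the quotient by this ideal. -/
def redIdeal (S : DHSetting k R) : Submodule ℂ S.D :=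
  Submodule.span ℂ {d : S.D | ∃ (x y : S.D) (P : R), Projective P ∧
    d = S.mulD x (S.mulD (S.KK (K0.cls R P, K0.cls R P) - S.one) y)}

/-- The reduced localized Hall algebra `DH_red(R)`. -/
def DHred (S : DHSetting k R) := S.D ⧸ redIdeal S

instance (S : DHSetting k R) : AddCommGroup (DHred S) := by
  unfold DHred; infer_instance

instance (S : DHSetting k R) : Module ℂ (DHred S) := by
  unfold DHred; infer_instance

/-- The multiplication map `H(A) ⊗ ℂ[K(R)] ⊗ H(A) → DH_red(R)`,
`[A] ⊗ α ⊗ [B] ↦ E_A ⋆ K_α ⋆ F_B`. -/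
def triMap (S : DHSetting k R)
    (rP rQ : R → R) (rf : ∀ C : R, rP C ⟶ rQ C)
    (hfc : ∀ C : R, IsFinHom R C → FinCx R (Z2Cx.Cf R (rf C)))
    (hfcd : ∀ C : R, IsFinHom R C → FinCx R (Z2Cx.dagger R (Z2Cx.Cf R (rf C)))) :
    ((IsoA R →₀ ℂ) ⊗[ℂ] ((K0 R →₀ ℂ) ⊗[ℂ] (IsoA R →₀ ℂ))) →ₗ[ℂ] DHred S :=
  TensorProduct.lift
    ((Finsupp.lift (((K0 R →₀ ℂ) ⊗[ℂ] (IsoA R →₀ ℂ)) →ₗ[ℂ] DHred S) ℂ (IsoA R))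
      fun a => TensorProduct.lift
        ((Finsupp.lift ((IsoA R →₀ ℂ) →ₗ[ℂ] DHred S) ℂ (K0 R))
          fun α => (Finsupp.lift (DHred S) ℂ (IsoA R))
            fun b => Submodule.Quotient.mk
              (S.mulD
                (Eelt S (Z2Cx.Cf R (rf (Quot.out a).1))
                  (hfc (Quot.out a).1 (Quot.out a).2))
                (S.mulD (S.KK (α, 0))
                  (Eelt S (Z2Cx.dagger R (Z2Cx.Cf R (rf (Quot.out b).1)))
                    (hfcd (Quot.out b).1 (Quot.out b).2))))))

/-!
The elements `[C_A ⊕ C_B^†] ⋆ K_α ⋆ K_β^†` form a basis of `DH(R)`: by Schanuel's lemma a complex of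
projectives is determined by its homology up to contractible summands `K_P ⊕ K_Q^†`, which multiply
like scalars times `K_{[P]} ⋆ K_{[Q]}^†`. Passing to `DH_red(R)` identifies `K_α ⋆ K_β^†` with
`K_{α - β}`, so the elements `[C_A ⊕ C_B^†] ⋆ K_α` form a basis there. In the Hall product of `C_A`
and `C_B^†` the split extension contributes a nonzero multiple of `[C_A ⊕ C_B^†]`, and by
Riedtmann's argument the middle term of any other extension has strictly fewer endomorphisms in the
homotopy category. Hence the matrix of the multiplication map is triangular with nonzero diagonal
entries, for an order in which every element has finite height.
-/

/-! ### Counting morphisms -/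

section FiniteGroups

variable {A B G : Type*} [AddGroup A] [AddGroup B] [AddGroup G] {f : A →+ B} {g : B →+ G}

lemma exists_surjective_prod_of_exact (h : g.ker ≤ f.range) :
    ∃ φ : A × g.range → B, Function.Surjective φ := by
  choose lift hlift using fun y : g.range => y.2
  refine ⟨fun x => f x.1 + lift x.2, fun b => ?_⟩
  let y : g.range := ⟨g b, b, rfl⟩
  obtain ⟨a, ha⟩ : b - lift y ∈ f.range := h (by simp [AddMonoidHom.mem_ker, hlift y, y])
  exact ⟨(a, y), by simp [ha]⟩

lemma finite_of_exact [Finite A] [Finite G] (h : g.ker ≤ f.range) : Finite B :=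
  let ⟨_, hφ⟩ := exists_surjective_prod_of_exact h
  Finite.of_surjective _ hφ

lemma card_le_card_mul_card_range_of_exact [Finite A] [Finite G] (h : g.ker ≤ f.range) :
    Nat.card B ≤ Nat.card A * Nat.card g.range := by
  obtain ⟨φ, hφ⟩ := exists_surjective_prod_of_exact h
  simpa only [Nat.card_prod] using Nat.card_le_card_of_surjective φ hφ

lemma card_le_of_exact [Finite A] [Finite G] (h : g.ker ≤ f.range) :
    Nat.card B ≤ Nat.card A * Nat.card G :=
  (card_le_card_mul_card_range_of_exact h).trans
    (Nat.mul_le_mul_left _ (Nat.card_le_card_of_injective _ g.range.subtype_injective))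

lemma card_lt_of_exact [Finite A] [Finite G] (h : g.ker ≤ f.range)
    (hg : ¬ Function.Surjective g) : Nat.card B < Nat.card A * Nat.card G := by
  have hlt : Nat.card g.range < Nat.card G := by
    refine lt_of_le_of_ne (Nat.card_le_card_of_injective _ g.range.subtype_injective) fun heq => ?_
    exact hg (AddMonoidHom.range_eq_top.1 (AddSubgroup.eq_top_of_card_eq _ heq))
  exact (card_le_card_mul_card_range_of_exact h).trans_lt
    (Nat.mul_lt_mul_of_pos_left hlt Nat.card_pos)

end FiniteGroups

section Preadditive

variable {𝒯 : Type*} [Category 𝒯] [Preadditive 𝒯]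

lemma card_hom_biprod [HasBinaryBiproducts 𝒯] (X M N : 𝒯) :
    Nat.card (X ⟶ M ⊞ N) = Nat.card (X ⟶ M) * Nat.card (X ⟶ N) := by
  rw [← Nat.card_prod]
  exact Nat.card_congr
    { toFun := fun f => (f ≫ biprod.fst, f ≫ biprod.snd)
      invFun := fun f => biprod.lift f.1 f.2
      left_inv := fun f => by ext <;> simp
      right_inv := fun f => by simp }

lemma card_biprod_hom [HasBinaryBiproducts 𝒯] (M N X : 𝒯) :
    Nat.card (M ⊞ N ⟶ X) = Nat.card (M ⟶ X) * Nat.card (N ⟶ X) := by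
  rw [← Nat.card_prod]
  exact Nat.card_congr
    { toFun := fun f => (biprod.inl ≫ f, biprod.inr ≫ f)
      invFun := fun f => biprod.desc f.1 f.2
      left_inv := fun f => by ext <;> simp
      right_inv := fun f => by simp }

/-- Riedtmann's argument: `|End E| ≤ |Hom(M, E)| |Hom(N, E)|`, and the left exact sequence
`Hom(M, N) → Hom(M, E) → Hom(M, M)` is not surjective on the right. -/
lemma card_end_lt_card_end_biprod [HasBinaryBiproducts 𝒯] {N E M : 𝒯} (i : N ⟶ E) (p : E ⟶ M)
    [Finite (M ⟶ M)] [Finite (M ⟶ N)] [Finite (N ⟶ M)] [Finite (N ⟶ N)]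
    (hlift : ∀ {X : 𝒯} (f : X ⟶ E), f ≫ p = 0 → ∃ g, g ≫ i = f)
    (hdesc : ∀ {X : 𝒯} (f : E ⟶ X), i ≫ f = 0 → ∃ g, p ≫ g = f)
    (hsplit : ¬ ∃ s, s ≫ p = 𝟙 M) :
    Nat.card (E ⟶ E) < Nat.card (M ⊞ N ⟶ M ⊞ N) := by
  have hexact (X : 𝒯) :
      (Preadditive.rightComp X p).ker ≤ (Preadditive.rightComp X i).range := fun f hf => hlift f hf
  have hexact' : (Preadditive.leftComp E i).ker ≤ (Preadditive.leftComp E p).range :=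
    fun f hf => hdesc f hf
  have : Finite (M ⟶ E) := finite_of_exact (hexact M)
  have : Finite (N ⟶ E) := finite_of_exact (hexact N)
  have hM : Nat.card (M ⟶ E) < Nat.card (M ⟶ N) * Nat.card (M ⟶ M) :=
    card_lt_of_exact (hexact M) fun hsurj => hsplit (hsurj (𝟙 M))
  calc Nat.card (E ⟶ E)
      ≤ Nat.card (M ⟶ E) * Nat.card (N ⟶ E) := card_le_of_exact hexact'
    _ ≤ Nat.card (M ⟶ E) * (Nat.card (N ⟶ N) * Nat.card (N ⟶ M)) :=
        Nat.mul_le_mul_left _ (card_le_of_exact (hexact N))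
    _ < (Nat.card (M ⟶ N) * Nat.card (M ⟶ M)) * (Nat.card (N ⟶ N) * Nat.card (N ⟶ M)) :=
        Nat.mul_lt_mul_of_pos_right hM (Nat.mul_pos Nat.card_pos Nat.card_pos)
    _ = Nat.card (M ⊞ N ⟶ M ⊞ N) := by
        simp only [card_hom_biprod, card_biprod_hom]; ring

end Preadditive

/-! ### Triangular linear maps -/

section Triangular

variable {ι κ α 𝕜 V W : Type*} [LinearOrder α] [Field 𝕜] [AddCommGroup V] [Module 𝕜 V]
  [AddCommGroup W] [Module 𝕜 W] (b : Module.Basis ι 𝕜 V) (b' : Module.Basis κ 𝕜 W)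
  {f : V →ₗ[𝕜] W} {e : ι → κ} (m : κ → α)

theorem injective_of_triangular (he : Function.Injective e)
    (h : ∀ i, ∃ c : 𝕜, c ≠ 0 ∧
      f (b i) - c • b' (e i) ∈ Submodule.span 𝕜 (b' '' {j | m j < m (e i)})) :
    Function.Injective f := by
  choose c hc h using h
  have hcoord {i j : ι} (hij : m (e j) ≤ m (e i)) :
      b'.repr (f (b j)) (e i) = Finsupp.single (e j) (c j) (e i) := by
    have : b'.repr (f (b j) - c j • b' (e j)) (e i) = 0 :=
      Finsupp.notMem_support_iff.1 fun hi => hij.not_gt (b'.mem_span_image.1 (h j) hi)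
    simpa [sub_eq_zero] using this
  refine LinearMap.ker_eq_bot.1 (LinearMap.ker_eq_bot'.2 fun x hx => ?_)
  by_contra hne
  obtain ⟨i, hi, hmax⟩ := (b.repr x).support.exists_max_image (m ∘ e)
    (Finsupp.support_nonempty_iff.2 (b.repr.map_ne_zero_iff.2 hne))
  have hxi : b.repr x i * c i = 0 :=
    calc
      b.repr x i * c i = ∑ j ∈ (b.repr x).support, b.repr x j * b'.repr (f (b j)) (e i) := by
        rw [Finset.sum_eq_single i]
        · rw [hcoord le_rfl, Finsupp.single_eq_same]
        · intro j hj hji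
          rw [hcoord (hmax j hj), Finsupp.single_eq_of_ne (he.ne hji.symm), mul_zero]
        · exact fun hi' => absurd hi hi'
      _ = b'.repr (f x) (e i) := by
        conv_rhs => rw [← b.linearCombination_repr x, Finsupp.linearCombination_apply]
        simp [Finsupp.sum]
      _ = 0 := by rw [hx, map_zero, Finsupp.zero_apply]
  exact mul_ne_zero (Finsupp.mem_support_iff.1 hi) (hc i) hxi

theorem surjective_of_triangular [WellFoundedLT α] (he : Function.Surjective e)
    (h : ∀ i, ∃ c : 𝕜, c ≠ 0 ∧
      f (b i) - c • b' (e i) ∈ Submodule.span 𝕜 (b' '' {j | m j < m (e i)})) :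
    Function.Surjective f := by
  have hmem (j : κ) : b' j ∈ LinearMap.range f := by
    induction j using (InvImage.wf m wellFounded_lt).induction with
    | _ j ih =>
      obtain ⟨i, rfl⟩ := he j
      obtain ⟨c, hc, hi⟩ := h i
      have hlower : f (b i) - c • b' (e i) ∈ LinearMap.range f :=
        Submodule.span_le.2 (Set.image_subset_iff.2 fun j hj => ih j hj) hi
      exact (Submodule.smul_mem_iff _ hc).1
        ((Submodule.sub_mem_iff_right _ (LinearMap.mem_range_self f (b i))).1 hlower)
  rw [← LinearMap.range_eq_top, eq_top_iff, ← b'.span_eq, Submodule.span_le]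
  rintro _ ⟨j, rfl⟩
  exact hmem j

end Triangular

/-! ### `ℤ/2`-graded complexes -/

namespace Z2Cx

variable {C : Type u} [SmallCategory C] [Abelian C]

section Preadditive

variable {M N : Z2Cx C}

@[ext] lemma hom_ext {f g : M ⟶ N} (h0 : Hom.f0 f = Hom.f0 g) (h1 : Hom.f1 f = Hom.f1 g) :
    f = g :=
  Hom.ext h0 h1

@[simp] lemma f0_id (M : Z2Cx C) : Hom.f0 (𝟙 M) = 𝟙 M.X0 := rfl

@[simp] lemma f1_id (M : Z2Cx C) : Hom.f1 (𝟙 M) = 𝟙 M.X1 := rfl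

@[simp] lemma f0_comp {P : Z2Cx C} (f : M ⟶ N) (g : N ⟶ P) :
    Hom.f0 (f ≫ g) = Hom.f0 f ≫ Hom.f0 g := rfl

@[simp] lemma f1_comp {P : Z2Cx C} (f : M ⟶ N) (g : N ⟶ P) :
    Hom.f1 (f ≫ g) = Hom.f1 f ≫ Hom.f1 g := rfl

instance : Zero (M ⟶ N) := ⟨⟨0, 0, by simp, by simp⟩⟩

instance : Add (M ⟶ N) :=
  ⟨fun f g => ⟨Hom.f0 f + Hom.f0 g, Hom.f1 f + Hom.f1 g,
    by simp [Hom.comm0 f, Hom.comm0 g], by simp [Hom.comm1 f, Hom.comm1 g]⟩⟩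

instance : Neg (M ⟶ N) :=
  ⟨fun f => ⟨-Hom.f0 f, -Hom.f1 f, by simp [Hom.comm0 f], by simp [Hom.comm1 f]⟩⟩

instance : Sub (M ⟶ N) :=
  ⟨fun f g => ⟨Hom.f0 f - Hom.f0 g, Hom.f1 f - Hom.f1 g,
    by simp [Hom.comm0 f, Hom.comm0 g], by simp [Hom.comm1 f, Hom.comm1 g]⟩⟩

instance : SMul ℕ (M ⟶ N) :=
  ⟨fun n f => ⟨n • Hom.f0 f, n • Hom.f1 f, by simp [Hom.comm0 f], by simp [Hom.comm1 f]⟩⟩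

instance : SMul ℤ (M ⟶ N) :=
  ⟨fun n f => ⟨n • Hom.f0 f, n • Hom.f1 f, by simp [Hom.comm0 f], by simp [Hom.comm1 f]⟩⟩

@[simp] lemma f0_zero : Hom.f0 (0 : M ⟶ N) = 0 := rfl

@[simp] lemma f1_zero : Hom.f1 (0 : M ⟶ N) = 0 := rfl

@[simp] lemma f0_add (f g : M ⟶ N) : Hom.f0 (f + g) = Hom.f0 f + Hom.f0 g := rfl

@[simp] lemma f1_add (f g : M ⟶ N) : Hom.f1 (f + g) = Hom.f1 f + Hom.f1 g := rfl

instance : AddCommGroup (M ⟶ N) :=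
  Function.Injective.addCommGroup (fun f : M ⟶ N => (Hom.f0 f, Hom.f1 f))
    (fun _ _ h => hom_ext (congrArg Prod.fst h) (congrArg Prod.snd h))
    rfl (fun _ _ => rfl) (fun _ => rfl) (fun _ _ => rfl) (fun _ _ => rfl) (fun _ _ => rfl)

instance : Preadditive (Z2Cx C) where
  add_comp _ _ _ _ _ _ := by ext <;> simp
  comp_add _ _ _ _ _ _ := by ext <;> simp

end Preadditive

section Isomorphisms

variable {M N : Z2Cx C}

/-- An isomorphism of complexes from isomorphisms of the terms that commute with the
differentials. -/
def isoMk (e0 : M.X0 ≅ N.X0) (e1 : M.X1 ≅ N.X1) (comm0 : M.d0 ≫ e1.hom = e0.hom ≫ N.d0)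
    (comm1 : M.d1 ≫ e0.hom = e1.hom ≫ N.d1) : M ≅ N where
  hom := ⟨e0.hom, e1.hom, comm0, comm1⟩
  inv := ⟨e0.inv, e1.inv,
    (Iso.eq_inv_comp e0).2 (by rw [← reassoc_of% comm0, e1.hom_inv_id, Category.comp_id]),
    (Iso.eq_inv_comp e1).2 (by rw [← reassoc_of% comm1, e0.hom_inv_id, Category.comp_id])⟩
  hom_inv_id := by ext <;> simp
  inv_hom_id := by ext <;> simp

end Isomorphisms

section Biproducts

/-- The direct sum of two complexes with its canonical inclusions and projections. -/
def dsumBicone (M N : Z2Cx C) : BinaryBicone M N where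
  pt := dsum C M N
  fst := ⟨biprod.fst, biprod.fst, by simp [dsum], by simp [dsum]⟩
  snd := ⟨biprod.snd, biprod.snd, by simp [dsum], by simp [dsum]⟩
  inl := ⟨biprod.inl, biprod.inl, by simp [dsum], by simp [dsum]⟩
  inr := ⟨biprod.inr, biprod.inr, by simp [dsum], by simp [dsum]⟩
  inl_fst := by ext <;> exact biprod.inl_fst
  inl_snd := by ext <;> exact biprod.inl_snd
  inr_fst := by ext <;> exact biprod.inr_fst
  inr_snd := by ext <;> exact biprod.inr_snd

/-- The direct sum of two complexes is their biproduct. -/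
def dsumIsBilimit (M N : Z2Cx C) : (dsumBicone M N).IsBilimit :=
  isBinaryBilimitOfTotal _ (by ext : 1 <;> exact biprod.total)

instance : HasBinaryBiproducts (Z2Cx C) where
  has_binary_biproduct M N := ⟨⟨⟨dsumBicone M N, dsumIsBilimit M N⟩⟩⟩

lemma isZero_zeroCx : IsZero (zeroCx C) :=
  (IsZero.iff_id_eq_zero _).2
    (hom_ext ((isZero_zero C).eq_of_src _ _) ((isZero_zero C).eq_of_src _ _))

instance : HasZeroObject (Z2Cx C) := ⟨⟨zeroCx C, isZero_zeroCx⟩⟩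

/-- The explicit direct sum is isomorphic to the chosen biproduct. -/
def dsumIso (M N : Z2Cx C) : dsum C M N ≅ M ⊞ N :=
  biprod.uniqueUpToIso M N (dsumIsBilimit M N)

/-- The direct sum is functorial for isomorphisms. -/
def dsumCongr {M M' N N' : Z2Cx C} (e : M ≅ M') (e' : N ≅ N') : dsum C M N ≅ dsum C M' N' :=
  dsumIso M N ≪≫ biprod.mapIso e e' ≪≫ (dsumIso M' N').symm

attribute [local instance] preservesBinaryBiproducts_of_preservesBiproducts

/-- An additive functor sends the explicit direct sum of complexes to a biproduct. -/
def mapDsum {𝒯 : Type*} [Category 𝒯] [Preadditive 𝒯] [HasBinaryBiproducts 𝒯]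
    (F : Z2Cx C ⥤ 𝒯) [F.Additive] (M N : Z2Cx C) : F.obj (dsum C M N) ≅ F.obj M ⊞ F.obj N :=
  F.mapIso (dsumIso M N) ≪≫ F.mapBiprod M N

end Biproducts

section IsoClasses

instance : Zero (CxCls C) := ⟨ccls C (zeroCx C)⟩

instance : Add (CxCls C) :=
  ⟨Quot.map₂ (dsum C) (fun M _ _ ⟨e⟩ => ⟨dsumCongr (Iso.refl M) e⟩)
    (fun _ _ N ⟨e⟩ => ⟨dsumCongr e (Iso.refl N)⟩)⟩

lemma ccls_dsum (M N : Z2Cx C) : ccls C (dsum C M N) = ccls C M + ccls C N := rfl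

lemma ccls_eq_iff {M N : Z2Cx C} : ccls C M = ccls C N ↔ Nonempty (M ≅ N) := by
  have hequiv : Equivalence (cxRel C) :=
    ⟨fun M => ⟨Iso.refl M⟩, fun ⟨e⟩ => ⟨e.symm⟩, fun ⟨e⟩ ⟨e'⟩ => ⟨e ≪≫ e'⟩⟩
  exact Quot.eq.trans (hequiv.eqvGen_iff)

lemma ccls_congr {M N : Z2Cx C} (e : M ≅ N) : ccls C M = ccls C N :=
  ccls_eq_iff.2 ⟨e⟩

instance : AddCommMonoid (CxCls C) where
  add_assoc := by
    rintro ⟨M⟩ ⟨N⟩ ⟨P⟩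
    exact ccls_congr (dsumIso _ _ ≪≫ biprod.mapIso (dsumIso M N) (Iso.refl P) ≪≫
      biprod.associator M N P ≪≫ biprod.mapIso (Iso.refl M) (dsumIso N P).symm ≪≫
      (dsumIso _ _).symm)
  zero_add := by
    rintro ⟨M⟩
    exact ccls_congr (dsumIso _ _ ≪≫ (isoZeroBiprod isZero_zeroCx).symm)
  add_zero := by
    rintro ⟨M⟩
    exact ccls_congr (dsumIso _ _ ≪≫ (isoBiprodZero isZero_zeroCx).symm)
  add_comm := by
    rintro ⟨M⟩ ⟨N⟩
    exact ccls_congr (dsumIso _ _ ≪≫ biprod.braiding M N ≪≫ (dsumIso _ _).symm)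
  nsmul := nsmulRec

end IsoClasses

section Dagger

lemma dagger_dagger (M : Z2Cx C) : dagger C (dagger C M) = M := by
  cases M
  simp only [dagger, mk.injEq, heq_eq_eq, true_and]
  exact ⟨neg_neg _, neg_neg _⟩

/-- The involution `†` on morphisms of complexes. -/
def daggerFunctor : Z2Cx C ⥤ Z2Cx C where
  obj M := dagger C M
  map f := ⟨Hom.f1 f, Hom.f0 f, by simp [dagger, Hom.comm1 f], by simp [dagger, Hom.comm0 f]⟩

instance : (daggerFunctor (C := C)).Additive where

/-- The involution `†` on isomorphism classes. -/
def daggerCls : CxCls C →+ CxCls C where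
  toFun := Quot.map (dagger C) (fun _ _ ⟨e⟩ => ⟨daggerFunctor.mapIso e⟩)
  map_zero' := ccls_congr ((daggerFunctor.map_isZero isZero_zeroCx).iso isZero_zeroCx)
  map_add' := by
    rintro ⟨M⟩ ⟨N⟩
    exact ccls_congr (mapDsum daggerFunctor M N ≪≫ (dsumIso _ _).symm)

end Dagger

/-! ### Homotopies and extensions -/

section Homotopy

variable {M N : Z2Cx C}

/-- The null-homotopic map of complexes with homotopy `(h0, h1)`. -/
@[simps]
def boundary (h0 : M.X0 ⟶ N.X1) (h1 : M.X1 ⟶ N.X0) : M ⟶ N where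
  f0 := h0 ≫ N.d1 + M.d0 ≫ h1
  f1 := h1 ≫ N.d0 + M.d1 ≫ h0
  comm0 := by simp [N.d10, reassoc_of% M.d01]
  comm1 := by simp [N.d01, reassoc_of% M.d10]

lemma boundary_comp {P : Z2Cx C} (h0 : M.X0 ⟶ N.X1) (h1 : M.X1 ⟶ N.X0) (g : N ⟶ P) :
    boundary h0 h1 ≫ g = boundary (h0 ≫ Hom.f1 g) (h1 ≫ Hom.f0 g) := by
  ext <;> simp [Hom.comm0 g, Hom.comm1 g]

lemma comp_boundary {L : Z2Cx C} (g : L ⟶ M) (h0 : M.X0 ⟶ N.X1) (h1 : M.X1 ⟶ N.X0) :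
    g ≫ boundary h0 h1 = boundary (Hom.f0 g ≫ h0) (Hom.f1 g ≫ h1) := by
  ext <;> simp [reassoc_of% Hom.comm0 g, reassoc_of% Hom.comm1 g]

lemma boundary_add (h0 h0' : M.X0 ⟶ N.X1) (h1 h1' : M.X1 ⟶ N.X0) :
    boundary (h0 + h0') (h1 + h1') = boundary h0 h1 + boundary h0' h1' := by
  ext <;> simp only [boundary_f0, boundary_f1, f0_add, f1_add, Preadditive.add_comp,
    Preadditive.comp_add, add_add_add_comm]

lemma boundary_neg (h0 : M.X0 ⟶ N.X1) (h1 : M.X1 ⟶ N.X0) :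
    boundary (-h0) (-h1) = -boundary h0 h1 :=
  eq_neg_of_add_eq_zero_left (by rw [← boundary_add]; ext <;> simp)

variable (C) in
/-- Two maps of complexes are homotopic if their difference is null-homotopic. -/
def homotopyRel : HomRel (Z2Cx C) := fun _ _ f g => ∃ h0 h1, f - g = boundary h0 h1

instance : Congruence (homotopyRel C) where
  comp_left f _ _ := fun ⟨h0, h1, h⟩ => ⟨_, _, by rw [← Preadditive.comp_sub, h, comp_boundary]⟩
  comp_right g := fun ⟨h0, h1, h⟩ => ⟨_, _, by rw [← Preadditive.sub_comp, h, boundary_comp]⟩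
  equivalence :=
    { refl f := ⟨0, 0, by ext <;> simp⟩
      symm := fun ⟨h0, h1, h⟩ => ⟨-h0, -h1, by rw [boundary_neg, ← h, neg_sub]⟩
      trans := fun ⟨h0, h1, h⟩ ⟨h0', h1', h'⟩ =>
        ⟨h0 + h0', h1 + h1', by rw [boundary_add, ← h, ← h', sub_add_sub_cancel]⟩ }

lemma homotopyRel_add ⦃M N : Z2Cx C⦄ (f f' g g' : M ⟶ N) :
    homotopyRel C f f' → homotopyRel C g g' → homotopyRel C (f + g) (f' + g') :=
  fun ⟨h0, h1, h⟩ ⟨h0', h1', h'⟩ =>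
    ⟨h0 + h0', h1 + h1', by rw [boundary_add, ← h, ← h', add_sub_add_comm]⟩

variable (C) in
/-- The homotopy category of `ℤ/2`-graded complexes. -/
abbrev HomotopyCat := Quotient (homotopyRel C)

instance : Preadditive (HomotopyCat C) := Quotient.preadditive _ homotopyRel_add

/-- The functor sending a map of complexes to its homotopy class. -/
abbrev toHo : Z2Cx C ⥤ HomotopyCat C := Quotient.functor (homotopyRel C)

instance : (toHo (C := C)).Additive := Quotient.functor_additive _ homotopyRel_add

lemma toHo_map_eq_zero_iff {f : M ⟶ N} : toHo.map f = 0 ↔ ∃ h0 h1, f = boundary h0 h1 := by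
  rw [← toHo.map_zero, Quotient.functor_map_eq_iff, homotopyRel, sub_zero]

lemma toHo_map_boundary (h0 : M.X0 ⟶ N.X1) (h1 : M.X1 ⟶ N.X0) :
    toHo.map (boundary h0 h1) = 0 :=
  toHo_map_eq_zero_iff.2 ⟨h0, h1, rfl⟩

/-- A complex is contractible if it is a zero object of the homotopy category. -/
def IsContractible (M : Z2Cx C) : Prop := IsZero (toHo.obj M)

lemma isContractible_iff : IsContractible M ↔ ∃ h0 h1, 𝟙 M = boundary h0 h1 := by
  rw [← toHo_map_eq_zero_iff, toHo.map_id, IsContractible, IsZero.iff_id_eq_zero]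

lemma daggerFunctor_map_boundary (h0 : M.X0 ⟶ N.X1) (h1 : M.X1 ⟶ N.X0) :
    daggerFunctor.map (boundary h0 h1) =
      boundary (M := dagger C M) (N := dagger C N) (-h1) (-h0) := by
  apply hom_ext
  · change h1 ≫ N.d0 + M.d1 ≫ h0 = (-h1) ≫ (-N.d0) + (-M.d1) ≫ (-h0)
    simp
  · change h0 ≫ N.d1 + M.d0 ≫ h1 = (-h0) ≫ (-N.d1) + (-M.d0) ≫ (-h1)
    simp

lemma toHo_map_eq_zero_of_dagger {f : M ⟶ N} (hf : toHo.map (daggerFunctor.map f) = 0) :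
    toHo.map f = 0 := by
  obtain ⟨(h0 : M.X1 ⟶ N.X0), (h1 : M.X0 ⟶ N.X1), h⟩ := toHo_map_eq_zero_iff.1 hf
  refine toHo_map_eq_zero_iff.2 ⟨-h1, -h0, hom_ext ?_ ?_⟩
  · calc Hom.f0 f = h1 ≫ (-N.d1) + (-M.d0) ≫ h0 := congrArg Hom.f1 h
      _ = (-h1) ≫ N.d1 + M.d0 ≫ (-h0) := by simp
  · calc Hom.f1 f = h0 ≫ (-N.d0) + (-M.d1) ≫ h1 := congrArg Hom.f0 h
      _ = (-h0) ≫ N.d0 + M.d1 ≫ (-h1) := by simp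

lemma IsContractible.dagger (h : IsContractible M) : IsContractible (dagger C M) := by
  obtain ⟨h0, h1, h⟩ := isContractible_iff.1 h
  refine isContractible_iff.2 ⟨-h1, -h0, ?_⟩
  rw [← daggerFunctor_map_boundary, ← h]
  exact (daggerFunctor.map_id M).symm

lemma finite_toHo_hom_of_dagger
    [Finite (toHo.obj (dagger C M) ⟶ toHo.obj (dagger C N))] :
    Finite (toHo.obj M ⟶ toHo.obj N) := by
  choose rep hrep using fun x : toHo.obj M ⟶ toHo.obj N => toHo.map_surjective x
  refine Finite.of_injective
    (fun x => (toHo.map (daggerFunctor.map (rep x)) :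
      toHo.obj (dagger C M) ⟶ toHo.obj (dagger C N))) fun x y hxy => ?_
  rw [← sub_eq_zero, ← hrep x, ← hrep y, ← toHo.map_sub]
  apply toHo_map_eq_zero_of_dagger
  rw [daggerFunctor.map_sub, toHo.map_sub, sub_eq_zero]
  exact hxy

end Homotopy

section Extensions

variable {M N : Z2Cx C}

namespace ExtSES

variable (s : ExtSES M N)

lemma i_comp_p : s.i ≫ s.p = 0 := hom_ext s.w0 s.w1

lemma cancel_i {X : Z2Cx C} {f g : X ⟶ N} (h : f ≫ s.i = g ≫ s.i) : f = g :=
  have := s.ex0.mono_f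
  have := s.ex1.mono_f
  hom_ext ((cancel_mono (Hom.f0 s.i)).1 (congrArg Hom.f0 h))
    ((cancel_mono (Hom.f1 s.i)).1 (congrArg Hom.f1 h))

lemma cancel_p {X : Z2Cx C} {f g : M ⟶ X} (h : s.p ≫ f = s.p ≫ g) : f = g :=
  have := s.ex0.epi_g
  have := s.ex1.epi_g
  hom_ext ((cancel_epi (Hom.f0 s.p)).1 (congrArg Hom.f0 h))
    ((cancel_epi (Hom.f1 s.p)).1 (congrArg Hom.f1 h))

lemma exists_comp_i {X : Z2Cx C} (f : X ⟶ s.E) (hf : f ≫ s.p = 0) : ∃ g, g ≫ s.i = f := by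
  have := s.ex0.mono_f
  have := s.ex1.mono_f
  let g0 := s.ex0.exact.lift (Hom.f0 f) (congrArg Hom.f0 hf)
  let g1 := s.ex1.exact.lift (Hom.f1 f) (congrArg Hom.f1 hf)
  have hg0 : g0 ≫ Hom.f0 s.i = Hom.f0 f := s.ex0.exact.lift_f _ _
  have hg1 : g1 ≫ Hom.f1 s.i = Hom.f1 f := s.ex1.exact.lift_f _ _
  refine ⟨⟨g0, g1, ?_, ?_⟩, hom_ext hg0 hg1⟩
  · rw [← cancel_mono (Hom.f1 s.i), Category.assoc, hg1, Category.assoc, Hom.comm0 s.i,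
      ← Category.assoc, hg0, Hom.comm0 f]
  · rw [← cancel_mono (Hom.f0 s.i), Category.assoc, hg0, Category.assoc, Hom.comm1 s.i,
      ← Category.assoc, hg1, Hom.comm1 f]

lemma exists_p_comp {X : Z2Cx C} (f : s.E ⟶ X) (hf : s.i ≫ f = 0) : ∃ g, s.p ≫ g = f := by
  have := s.ex0.epi_g
  have := s.ex1.epi_g
  let g0 := s.ex0.exact.desc (Hom.f0 f) (congrArg Hom.f0 hf)
  let g1 := s.ex1.exact.desc (Hom.f1 f) (congrArg Hom.f1 hf)
  have hg0 : Hom.f0 s.p ≫ g0 = Hom.f0 f := s.ex0.exact.g_desc _ _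
  have hg1 : Hom.f1 s.p ≫ g1 = Hom.f1 f := s.ex1.exact.g_desc _ _
  refine ⟨⟨g0, g1, ?_, ?_⟩, hom_ext hg0 hg1⟩
  · rw [← cancel_epi (Hom.f0 s.p), ← Category.assoc, ← Hom.comm0 s.p, Category.assoc, hg1,
      Hom.comm0 f, ← hg0, Category.assoc]
  · rw [← cancel_epi (Hom.f1 s.p), ← Category.assoc, ← Hom.comm1 s.p, Category.assoc, hg0,
      Hom.comm1 f, ← hg1, Category.assoc]

/-- An extension of complexes splits if its projection has a section. -/
def IsSplit : Prop := ∃ σ, σ ≫ s.p = 𝟙 M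

variable {s} in
lemma IsSplit.extEquiv {t : ExtSES M N} (hs : s.IsSplit) (ht : t.IsSplit) :
    ExtEquiv M N s t := by
  obtain ⟨σ, hσ⟩ := hs
  obtain ⟨τ, hτ⟩ := ht
  obtain ⟨ρ, hρ⟩ := s.exists_comp_i (𝟙 _ - s.p ≫ σ) (by simp [hσ])
  obtain ⟨θ, hθ⟩ := t.exists_comp_i (𝟙 _ - t.p ≫ τ) (by simp [hτ])
  have hsρ : s.i ≫ ρ = 𝟙 N := s.cancel_i (by simp [hρ, reassoc_of% s.i_comp_p])
  have htθ : t.i ≫ θ = 𝟙 N := t.cancel_i (by simp [hθ, reassoc_of% t.i_comp_p])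
  have hσρ : σ ≫ ρ = 0 := s.cancel_i (by simp [hρ, reassoc_of% hσ])
  have hτθ : τ ≫ θ = 0 := t.cancel_i (by simp [hθ, reassoc_of% hτ])
  refine ⟨⟨s.p ≫ τ + ρ ≫ t.i, t.p ≫ σ + θ ≫ s.i, ?_, ?_⟩, ?_, ?_⟩
  · simp [reassoc_of% hτ, reassoc_of% htθ, reassoc_of% hτθ, reassoc_of% t.i_comp_p, hρ]
  · simp [reassoc_of% hσ, reassoc_of% hsρ, reassoc_of% hσρ, reassoc_of% s.i_comp_p, hθ]
  · simp [reassoc_of% s.i_comp_p, reassoc_of% hsρ]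
  · simp [hτ, t.i_comp_p]

variable (M N) in
/-- The split extension of `M` by `N`. -/
def trivial : ExtSES M N where
  E := dsum C N M
  i := (dsumBicone N M).inl
  p := (dsumBicone N M).snd
  w0 := biprod.inl_snd
  w1 := biprod.inl_snd
  ex0 := (ShortComplex.Splitting.ofHasBinaryBiproduct N.X0 M.X0).shortExact
  ex1 := (ShortComplex.Splitting.ofHasBinaryBiproduct N.X1 M.X1).shortExact

lemma isSplit_trivial : (trivial M N).IsSplit := ⟨(dsumBicone N M).inr, (dsumBicone N M).inr_snd⟩

variable {s} in
lemma IsSplit.ccls_E (hs : s.IsSplit) : ccls C s.E = ccls C M + ccls C N := by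
  obtain ⟨φ, -, -⟩ := hs.extEquiv isSplit_trivial
  exact (ccls_congr φ).trans (add_comm (ccls C N) (ccls C M))

section ProjectiveComponents

variable [Projective M.X0] [Projective M.X1]

/-- The degreewise splitting, in degree `0`, of an extension of a complex of projectives. -/
def splitting0 : (ShortComplex.mk _ _ s.w0).Splitting :=
  have : Projective (ShortComplex.mk _ _ s.w0).X₃ := inferInstanceAs (Projective M.X0)
  s.ex0.splittingOfProjective

/-- The degreewise splitting, in degree `1`, of an extension of a complex of projectives. -/
def splitting1 : (ShortComplex.mk _ _ s.w1).Splitting :=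
  have : Projective (ShortComplex.mk _ _ s.w1).X₃ := inferInstanceAs (Projective M.X1)
  s.ex1.splittingOfProjective

lemma exists_boundary_comp_p {X : Z2Cx C} (h0 : X.X0 ⟶ M.X1) (h1 : X.X1 ⟶ M.X0) :
    ∃ k0 k1, boundary k0 k1 ≫ s.p = boundary h0 h1 := by
  have hσ0 : s.splitting0.s ≫ Hom.f0 s.p = 𝟙 M.X0 := s.splitting0.s_g
  have hσ1 : s.splitting1.s ≫ Hom.f1 s.p = 𝟙 M.X1 := s.splitting1.s_g
  refine ⟨h0 ≫ s.splitting1.s, h1 ≫ s.splitting0.s, ?_⟩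
  simp only [boundary_comp, Category.assoc, hσ0, hσ1, Category.comp_id]

lemma exists_i_comp_boundary {X : Z2Cx C} (h0 : N.X0 ⟶ X.X1) (h1 : N.X1 ⟶ X.X0) :
    ∃ k0 k1, s.i ≫ boundary k0 k1 = boundary h0 h1 := by
  have hρ0 : Hom.f0 s.i ≫ s.splitting0.r = 𝟙 N.X0 := s.splitting0.f_r
  have hρ1 : Hom.f1 s.i ≫ s.splitting1.r = 𝟙 N.X1 := s.splitting1.f_r
  refine ⟨s.splitting0.r ≫ h0, s.splitting1.r ≫ h1, ?_⟩
  simp only [comp_boundary, reassoc_of% hρ0, reassoc_of% hρ1]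

lemma exists_comp_toHo_i {X : HomotopyCat C} (f : X ⟶ toHo.obj s.E)
    (hf : f ≫ toHo.map s.p = 0) : ∃ g, g ≫ toHo.map s.i = f := by
  obtain ⟨X⟩ := X
  obtain ⟨f, rfl⟩ := toHo.map_surjective (X := X) f
  obtain ⟨h0, h1, h⟩ := toHo_map_eq_zero_iff.1 ((toHo.map_comp f s.p).trans hf)
  obtain ⟨k0, k1, hk⟩ := s.exists_boundary_comp_p h0 h1
  obtain ⟨g, hg⟩ := s.exists_comp_i (f - boundary k0 k1)
    (by rw [Preadditive.sub_comp, h, hk, sub_self])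
  refine ⟨toHo.map g, ?_⟩
  rw [← toHo.map_comp, hg, toHo.map_sub, toHo_map_boundary, sub_zero]

lemma exists_toHo_p_comp {X : HomotopyCat C} (f : toHo.obj s.E ⟶ X)
    (hf : toHo.map s.i ≫ f = 0) : ∃ g, toHo.map s.p ≫ g = f := by
  obtain ⟨X⟩ := X
  obtain ⟨f, rfl⟩ := toHo.map_surjective (Y := X) f
  obtain ⟨h0, h1, h⟩ := toHo_map_eq_zero_iff.1 ((toHo.map_comp s.i f).trans hf)
  obtain ⟨k0, k1, hk⟩ := s.exists_i_comp_boundary h0 h1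
  obtain ⟨g, hg⟩ := s.exists_p_comp (f - boundary k0 k1)
    (by rw [Preadditive.comp_sub, h, hk, sub_self])
  refine ⟨toHo.map g, ?_⟩
  rw [← toHo.map_comp, hg, toHo.map_sub, toHo_map_boundary, sub_zero]

lemma isSplit_of_toHo (h : ∃ σ, σ ≫ toHo.map s.p = 𝟙 (toHo.obj M)) : s.IsSplit := by
  obtain ⟨σ, hσ⟩ := h
  obtain ⟨σ, rfl⟩ := toHo.map_surjective σ
  have hzero : toHo.map (σ ≫ s.p - 𝟙 M) = 0 := by
    rw [toHo.map_sub, toHo.map_comp, hσ, toHo.map_id, sub_self]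
  obtain ⟨h0, h1, h⟩ := toHo_map_eq_zero_iff.1 hzero
  obtain ⟨k0, k1, hk⟩ := s.exists_boundary_comp_p h0 h1
  exact ⟨σ - boundary k0 k1, by rw [Preadditive.sub_comp, hk, ← h, sub_sub_cancel]⟩

lemma isSplit_of_isContractible (hN : IsContractible N) : s.IsSplit := by
  obtain ⟨h0, h1, h⟩ := isContractible_iff.1 hN
  obtain ⟨k0, k1, hk⟩ := s.exists_i_comp_boundary h0 h1
  obtain ⟨σ, hσ⟩ := s.exists_p_comp (𝟙 _ - boundary k0 k1 ≫ s.i)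
    (by rw [Preadditive.comp_sub, reassoc_of% hk, ← h]; simp)
  exact ⟨σ, s.cancel_p (by rw [reassoc_of% hσ]; simp [s.i_comp_p])⟩

end ProjectiveComponents

end ExtSES

end Extensions

section EndCard

variable {M N : Z2Cx C}

/-- The number of homotopy classes of endomorphisms of a complex, as a function of its
isomorphism class; it is `0` if there are infinitely many. -/
def endCard : CxCls C → ℕ :=
  Quot.lift (fun M => Nat.card (toHo.obj M ⟶ toHo.obj M))
    (fun _ _ ⟨e⟩ => Nat.card_congr ((toHo.mapIso e).homCongr (toHo.mapIso e)))

attribute [local instance] preservesBinaryBiproducts_of_preservesBiproducts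

instance : HasBinaryBiproducts (HomotopyCat C) where
  has_binary_biproduct := by
    rintro ⟨M⟩ ⟨N⟩
    exact HasBinaryBiproduct.mk
      ⟨toHo.mapBinaryBicone (dsumBicone M N), isBinaryBilimitOfPreserves toHo (dsumIsBilimit M N)⟩

lemma endCard_ccls_add (M N : Z2Cx C) :
    endCard (ccls C M + ccls C N) =
      Nat.card (toHo.obj M ⊞ toHo.obj N ⟶ toHo.obj M ⊞ toHo.obj N) :=
  Nat.card_congr ((mapDsum toHo M N).homCongr (mapDsum toHo M N))

lemma endCard_add_of_isContractible (c : CxCls C) (hN : IsContractible N) :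
    endCard (c + ccls C N) = endCard c := by
  obtain ⟨M⟩ := c
  let e : toHo.obj M ⊞ toHo.obj N ≅ toHo.obj M := (isoBiprodZero hN).symm
  exact (endCard_ccls_add M N).trans (Nat.card_congr (e.homCongr e))

lemma ExtSES.endCard_lt [Projective M.X0] [Projective M.X1] (s : ExtSES M N)
    [Finite (toHo.obj M ⟶ toHo.obj M)] [Finite (toHo.obj M ⟶ toHo.obj N)]
    [Finite (toHo.obj N ⟶ toHo.obj M)] [Finite (toHo.obj N ⟶ toHo.obj N)] (hs : ¬ s.IsSplit) :
    endCard (ccls C s.E) < endCard (ccls C M + ccls C N) := by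
  rw [endCard_ccls_add]
  exact card_end_lt_card_end_biprod (toHo.map s.i) (toHo.map s.p) s.exists_comp_toHo_i
    s.exists_toHo_p_comp (fun h => hs (s.isSplit_of_toHo h))

end EndCard

section ExtCount

variable {M N : Z2Cx C}

lemma exists_extSES_of_extCount_ne_zero {c : CxCls C} (h : extCount C M N c ≠ 0) :
    ∃ s : ExtSES M N, ccls C s.E = c := by
  obtain ⟨⟨⟨s⟩, hs⟩⟩ := (Nat.card_ne_zero.1 h).1
  exact ⟨s, hs⟩

lemma extCount_add_eq_one
    (h : ∀ s : ExtSES M N, ccls C s.E = ccls C M + ccls C N → s.IsSplit) :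
    extCount C M N (ccls C M + ccls C N) = 1 := by
  refine Nat.card_eq_one_iff_unique.2 ⟨⟨?_⟩, ?_⟩
  · rintro ⟨⟨s⟩, hs⟩ ⟨⟨t⟩, ht⟩
    exact Subtype.ext (Quot.sound ((h s hs).extEquiv (h t ht)))
  · exact ⟨Quot.mk _ (ExtSES.trivial M N), ExtSES.isSplit_trivial.ccls_E⟩

variable [Projective M.X0] [Projective M.X1]

lemma eq_add_of_extCount_ne_zero (hN : IsContractible N) {c : CxCls C}
    (h : extCount C M N c ≠ 0) : c = ccls C M + ccls C N := by
  obtain ⟨s, rfl⟩ := exists_extSES_of_extCount_ne_zero h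
  exact (s.isSplit_of_isContractible hN).ccls_E

variable [Finite (toHo.obj M ⟶ toHo.obj M)] [Finite (toHo.obj M ⟶ toHo.obj N)]
  [Finite (toHo.obj N ⟶ toHo.obj M)] [Finite (toHo.obj N ⟶ toHo.obj N)]

lemma ExtSES.isSplit_of_ccls_E {s : ExtSES M N} (hs : ccls C s.E = ccls C M + ccls C N) :
    s.IsSplit := by
  by_contra hsplit
  exact (s.endCard_lt hsplit).ne (congrArg endCard hs)

lemma endCard_lt_of_extCount_ne_zero {c : CxCls C} (h : extCount C M N c ≠ 0)
    (hc : c ≠ ccls C M + ccls C N) : endCard c < endCard (ccls C M + ccls C N) := by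
  obtain ⟨s, rfl⟩ := exists_extSES_of_extCount_ne_zero h
  exact s.endCard_lt fun hs => hc hs.ccls_E

end ExtCount

end Z2Cx

/-! ### Homology and resolutions -/

section FinHom

variable {C : Type u} [SmallCategory C] {A B : C}

lemma IsFinHom.of_iso (hA : IsFinHom C A) (e : A ≅ B) : IsFinHom C B :=
  fun M => have := hA M; Finite.of_equiv _ ((Iso.refl M).homCongr e)

lemma IsFinHom.of_isZero [HasZeroMorphisms C] (hA : IsZero A) : IsFinHom C A :=
  fun M => have : Subsingleton (M ⟶ A) := ⟨hA.eq_of_tgt⟩; inferInstance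

lemma IsFinHom.biprod [Abelian C] (hA : IsFinHom C A) (hB : IsFinHom C B) :
    IsFinHom C (A ⊞ B) := fun M => by
  have := hA M
  have := hB M
  exact Finite.of_injective (fun f : M ⟶ A ⊞ B => (f ≫ biprod.fst, f ≫ biprod.snd)) fun f g h =>
    biprod.hom_ext _ _ (congrArg Prod.fst h) (congrArg Prod.snd h)

end FinHom

namespace Z2Cx

variable {C : Type u} [SmallCategory C] [Abelian C] {M N K : Z2Cx C}

section Homology

variable (C) in
/-- The functor sending `M` to the short complex `M.X1 ⟶ M.X0 ⟶ M.X1` computing `H0 C M`. -/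
def shortComplexFunctor : Z2Cx C ⥤ ShortComplex C where
  obj M := ShortComplex.mk M.d1 M.d0 M.d10
  map f := ⟨Hom.f1 f, Hom.f0 f, Hom.f1 f, (Hom.comm1 f).symm, (Hom.comm0 f).symm⟩

instance : (shortComplexFunctor C).Additive where

variable (C) in
/-- Degree `0` homology as a functor. -/
def H0Functor : Z2Cx C ⥤ C := shortComplexFunctor C ⋙ ShortComplex.homologyFunctor C

instance : (H0Functor C).Additive := inferInstanceAs (_ ⋙ _).Additive

variable (C) in
/-- Degree `1` homology as a functor, up to the isomorphism `H1Iso`. -/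
def H1Functor : Z2Cx C ⥤ C := daggerFunctor ⋙ H0Functor C

instance : (H1Functor C).Additive := inferInstanceAs (_ ⋙ _).Additive

/-- The sign change identifying `H1 C M` with the degree `0` homology of `dagger C M`. -/
def H1Iso (M : Z2Cx C) : H1 C M ≅ (H1Functor C).obj M :=
  (ShortComplex.homologyFunctor C).mapIso
    (ShortComplex.isoMk (Iso.refl M.X0) (-Iso.refl M.X1) (Iso.refl M.X0)
      (by change 𝟙 M.X0 ≫ (-M.d0) = M.d0 ≫ (-𝟙 M.X1); simp)
      (by change (-𝟙 M.X1) ≫ (-M.d1) = M.d1 ≫ 𝟙 M.X0; simp) :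
      ShortComplex.mk M.d0 M.d1 M.d01 ≅ (shortComplexFunctor C).obj (dagger C M))

/-- Degree `0` homology of `†`. -/
def H0DaggerIso (M : Z2Cx C) : H0 C (dagger C M) ≅ H1 C M := (H1Iso M).symm

/-- Degree `1` homology of `†`. -/
def H1DaggerIso (M : Z2Cx C) : H1 C (dagger C M) ≅ H0 C M :=
  H1Iso (dagger C M) ≪≫ eqToIso (congrArg (H0 C) (dagger_dagger M))

/-- Degree `0` homology of isomorphic complexes. -/
def H0MapIso (e : M ≅ N) : H0 C M ≅ H0 C N := (H0Functor C).mapIso e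

/-- Degree `1` homology of isomorphic complexes. -/
def H1MapIso (e : M ≅ N) : H1 C M ≅ H1 C N :=
  H1Iso M ≪≫ (H1Functor C).mapIso e ≪≫ (H1Iso N).symm

/-- Degree `0` homology of a direct sum. -/
def H0DsumIso (M N : Z2Cx C) : H0 C (dsum C M N) ≅ H0 C M ⊞ H0 C N := mapDsum (H0Functor C) M N

/-- Degree `1` homology of a direct sum. -/
def H1DsumIso (M N : Z2Cx C) : H1 C (dsum C M N) ≅ H1 C M ⊞ H1 C N :=
  H1Iso _ ≪≫ mapDsum (H1Functor C) M N ≪≫ biprod.mapIso (H1Iso M).symm (H1Iso N).symm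

end Homology

section Acyclic

lemma Acyclic.dagger (h : Acyclic C M) : Acyclic C (dagger C M) :=
  ⟨h.2.of_iso (H0DaggerIso M), h.1.of_iso (H1DaggerIso M)⟩

lemma Acyclic.dsum (hM : Acyclic C M) (hN : Acyclic C N) : Acyclic C (dsum C M N) :=
  ⟨((biprod_isZero_iff _ _).2 ⟨hM.1, hN.1⟩).of_iso (H0DsumIso M N),
    ((biprod_isZero_iff _ _).2 ⟨hM.2, hN.2⟩).of_iso (H1DsumIso M N)⟩

lemma isZero_H1_Cf {P Q : C} (f : P ⟶ Q) [Mono f] : IsZero (H1 C (Cf C f)) :=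
  (ShortComplex.exact_iff_isZero_homology _).1
    ((ShortComplex.exact_iff_mono (ShortComplex.mk 0 f zero_comp) rfl).2 inferInstance)

lemma acyclic_KP (P : C) : Acyclic C (KP C P) :=
  ⟨(ShortComplex.exact_iff_isZero_homology _).1
    ((ShortComplex.exact_iff_epi (ShortComplex.mk (𝟙 P) 0 comp_zero) rfl).2
      (inferInstanceAs (Epi (𝟙 P)))), isZero_H1_Cf (𝟙 P)⟩

lemma acyclic_zeroCx : Acyclic C (zeroCx C) :=
  ⟨(H0Functor C).map_isZero isZero_zeroCx,
    ((H1Functor C).map_isZero isZero_zeroCx).of_iso (H1Iso _)⟩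

end Acyclic

end Z2Cx

namespace FinCx

open Z2Cx

variable {C : Type u} [SmallCategory C] [Abelian C] {M N : Z2Cx C}

lemma of_acyclic (hM0 : Projective M.X0) (hM1 : Projective M.X1) (hM : Acyclic C M) : FinCx C M :=
  ⟨hM0, hM1, .of_isZero hM.1, .of_isZero hM.2⟩

lemma zeroCx : FinCx C (zeroCx C) :=
  of_acyclic (Projective.zero_projective) (Projective.zero_projective) acyclic_zeroCx

lemma KP {P : C} (hP : Projective P) : FinCx C (KP C P) := of_acyclic hP hP (acyclic_KP P)

lemma dagger (hM : FinCx C M) : FinCx C (dagger C M) :=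
  ⟨hM.2.1, hM.1, hM.2.2.2.of_iso (H0DaggerIso M).symm, hM.2.2.1.of_iso (H1DaggerIso M).symm⟩

lemma dsum (hM : FinCx C M) (hN : FinCx C N) : FinCx C (dsum C M N) :=
  have := hM.1
  have := hM.2.1
  have := hN.1
  have := hN.2.1
  ⟨inferInstanceAs (Projective (M.X0 ⊞ N.X0)), inferInstanceAs (Projective (M.X1 ⊞ N.X1)),
    (hM.2.2.1.biprod hN.2.2.1).of_iso (H0DsumIso M N).symm,
    (hM.2.2.2.biprod hN.2.2.2).of_iso (H1DsumIso M N).symm⟩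

lemma finite_hom_Hcx (hN : FinCx C N) : Finite (Hcx C M ⟶ Hcx C N) :=
  have : Finite (H0 C M ⟶ H0 C N) := hN.2.2.1 _
  have : Finite (H1 C M ⟶ H1 C N) := hN.2.2.2 _
  Finite.of_injective
    (fun φ => ((Hom.f0 φ, Hom.f1 φ) : (H0 C M ⟶ H0 C N) × (H1 C M ⟶ H1 C N)))
    fun _ _ h => hom_ext (congrArg Prod.fst h) (congrArg Prod.snd h)

end FinCx

/-- A two-term projective resolution `0 ⟶ P ⟶ Q ⟶ A ⟶ 0`. -/
structure TwoTermResolution {C : Type u} [SmallCategory C] [Abelian C] (A : C) where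
  P : C
  Q : C
  projective_P : Projective P
  projective_Q : Projective Q
  f : P ⟶ Q
  π : Q ⟶ A
  w : f ≫ π = 0
  shortExact : (ShortComplex.mk f π w).ShortExact

namespace TwoTermResolution

open Z2Cx

variable {C : Type u} [SmallCategory C] [Abelian C] {A B : C} (ρ : TwoTermResolution A)

/-- The complex `C_A` of a two-term projective resolution of `A`. -/
abbrev cx : Z2Cx C := Cf C ρ.f

/-- The resolution of the cokernel given by a monomorphism between projectives. -/
def ofMono {P Q : C} (hP : Projective P) (hQ : Projective Q) (f : P ⟶ Q) [Mono f] :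
    TwoTermResolution (cokernel f) where
  P := P
  Q := Q
  projective_P := hP
  projective_Q := hQ
  f := f
  π := cokernel.π f
  w := cokernel.condition f
  shortExact := { exact := ShortComplex.exact_cokernel f }

/-- A resolution of `A` as a resolution of an object isomorphic to `A`. -/
def ofIso (e : A ≅ B) : TwoTermResolution B where
  P := ρ.P
  Q := ρ.Q
  projective_P := ρ.projective_P
  projective_Q := ρ.projective_Q
  f := ρ.f
  π := ρ.π ≫ e.hom
  w := by rw [← Category.assoc, ρ.w, zero_comp]
  shortExact := ShortComplex.shortExact_of_iso
    (ShortComplex.isoMk (S₁ := .mk ρ.f ρ.π ρ.w) (S₂ := .mk ρ.f (ρ.π ≫ e.hom) _)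
      (Iso.refl _) (Iso.refl _) e) ρ.shortExact

instance : Mono ρ.f := ρ.shortExact.mono_f

instance : Epi ρ.π := ρ.shortExact.epi_g

lemma exists_comp_f {X : C} (g : X ⟶ ρ.Q) (hg : g ≫ ρ.π = 0) : ∃ h, h ≫ ρ.f = g :=
  have : Mono (ShortComplex.mk ρ.f ρ.π ρ.w).f := inferInstanceAs (Mono ρ.f)
  ⟨ρ.shortExact.exact.lift g hg, ρ.shortExact.exact.lift_f g hg⟩

/-- The complex of a resolution of `A` has degree `0` homology `A`. -/
def H0Iso : H0 C ρ.cx ≅ A :=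
  (ShortComplex.LeftHomologyData.ofIsColimitCokernelCofork (ShortComplex.mk ρ.f 0 comp_zero) rfl
    _ ρ.shortExact.gIsCokernel).homologyIso

lemma finCx_cx (hA : IsFinHom C A) : FinCx C ρ.cx :=
  ⟨ρ.projective_Q, ρ.projective_P, hA.of_iso ρ.H0Iso.symm, .of_isZero (isZero_H1_Cf ρ.f)⟩

section Homotopy

variable {M : Z2Cx C}

lemma toHo_map_eq_zero {φ : M ⟶ ρ.cx} (hφ : Hom.f0 φ ≫ ρ.π = 0) : toHo.map φ = 0 := by
  obtain ⟨(f0 : M.X0 ⟶ ρ.Q), (f1 : M.X1 ⟶ ρ.P), _, (comm1 : M.d1 ≫ f0 = f1 ≫ ρ.f)⟩ := φ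
  obtain ⟨h, rfl⟩ := ρ.exists_comp_f f0 hφ
  have hf1 : M.d1 ≫ h = f1 := by rw [← cancel_mono ρ.f, Category.assoc, comm1]
  refine toHo_map_eq_zero_iff.2 ⟨h, 0, hom_ext ?_ ?_⟩
  · change h ≫ ρ.f = h ≫ ρ.f + M.d0 ≫ (0 : M.X1 ⟶ ρ.Q)
    rw [comp_zero, add_zero]
  · change f1 = (0 : M.X1 ⟶ ρ.Q) ≫ (0 : ρ.Q ⟶ ρ.P) + M.d1 ≫ h
    rw [comp_zero, zero_add, hf1]

lemma isContractible_cx (hA : IsZero A) : IsContractible ρ.cx := by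
  rw [IsContractible, IsZero.iff_id_eq_zero, ← toHo.map_id]
  exact ρ.toHo_map_eq_zero (hA.eq_of_tgt _ _)

lemma finite_toHo_hom_cx (hA : IsFinHom C A) : Finite (toHo.obj M ⟶ toHo.obj ρ.cx) := by
  choose rep hrep using fun x : toHo.obj M ⟶ toHo.obj ρ.cx => toHo.map_surjective x
  have := hA M.X0
  refine Finite.of_injective (fun x => (Hom.f0 (rep x) ≫ ρ.π : M.X0 ⟶ A)) fun x y hxy => ?_
  rw [← sub_eq_zero, ← hrep x, ← hrep y, ← toHo.map_sub]
  exact ρ.toHo_map_eq_zero ((Preadditive.sub_comp _ _ _).trans (sub_eq_zero.2 hxy))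

lemma finite_toHo_hom_dagger_cx (hA : IsFinHom C A) :
    Finite (toHo.obj M ⟶ toHo.obj (dagger C ρ.cx)) := by
  have : Finite (toHo.obj (dagger C M) ⟶ toHo.obj (dagger C (dagger C ρ.cx))) := by
    rw [dagger_dagger]
    exact ρ.finite_toHo_hom_cx hA
  exact finite_toHo_hom_of_dagger

end Homotopy

section PairOfResolutions

variable (τ : TwoTermResolution B)

/-- The complex `C_A ⊕ C_B^†` of resolutions of `A` and `B`. -/
abbrev pairCx : Z2Cx C := dsum C ρ.cx (dagger C τ.cx)

/-- The complex `C_A ⊕ C_B^†` has degree `0` homology `A`. -/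
def H0PairIso : H0 C (pairCx ρ τ) ≅ A :=
  H0DsumIso _ _ ≪≫ (isoBiprodZero ((isZero_H1_Cf τ.f).of_iso (H0DaggerIso _))).symm ≪≫ ρ.H0Iso

/-- The complex `C_A ⊕ C_B^†` has degree `1` homology `B`. -/
def H1PairIso : H1 C (pairCx ρ τ) ≅ B :=
  H1DsumIso _ _ ≪≫ (isoZeroBiprod (isZero_H1_Cf ρ.f)).symm ≪≫ H1DaggerIso _ ≪≫ τ.H0Iso

end PairOfResolutions

section Schanuel

variable (τ : TwoTermResolution A)

lemma nonempty_cx_iso (e : ρ.Q ≅ τ.Q) (he : e.hom ≫ τ.π = ρ.π) : Nonempty (ρ.cx ≅ τ.cx) := by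
  obtain ⟨a, ha⟩ := τ.exists_comp_f (ρ.f ≫ e.hom) (by rw [Category.assoc, he, ρ.w])
  obtain ⟨b, hb⟩ := ρ.exists_comp_f (τ.f ≫ e.inv) (by
    rw [Category.assoc, e.inv_comp_eq.2 he.symm, τ.w])
  have hab : a ≫ b = 𝟙 ρ.P := by simp [← cancel_mono ρ.f, hb, reassoc_of% ha]
  have hba : b ≫ a = 𝟙 τ.P := by simp [← cancel_mono τ.f, ha, reassoc_of% hb]
  exact ⟨isoMk e ⟨a, b, hab, hba⟩ (zero_comp.trans comp_zero.symm) ha.symm⟩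

/-- The resolution `0 ⟶ P ⊞ X ⟶ Q ⊞ X ⟶ A ⟶ 0` obtained by adding a projective object. -/
def addProjective {X : C} (hX : Projective X) : TwoTermResolution A where
  P := ρ.P ⊞ X
  Q := ρ.Q ⊞ X
  projective_P := have := ρ.projective_P; inferInstance
  projective_Q := have := ρ.projective_Q; inferInstance
  f := biprod.map ρ.f (𝟙 X)
  π := biprod.fst ≫ ρ.π
  w := by simp [ρ.w]
  shortExact :=
    { exact := ShortComplex.exact_of_f_is_kernel _ <| KernelFork.IsLimit.ofι' _ _ fun g hg =>
        ⟨biprod.lift (ρ.shortExact.exact.lift (g ≫ biprod.fst) (by simpa using hg))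
          (g ≫ biprod.snd),
          biprod.hom_ext _ _ (by simpa using ρ.shortExact.exact.lift_f _ _) (by simp)⟩
      mono_f := (inferInstance : Mono (biprod.map ρ.f (𝟙 X)))
      epi_g := (inferInstance : Epi (biprod.fst ≫ ρ.π)) }

lemma ccls_addProjective {X : C} (hX : Projective X) :
    ccls C (ρ.addProjective hX).cx = ccls C ρ.cx + ccls C (KP C X) := by
  have h0 : (0 : ρ.Q ⊞ X ⟶ ρ.P ⊞ X) = biprod.map 0 0 := by ext <;> simp
  exact ccls_congr (isoMk (Iso.refl _) (Iso.refl _)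
    ((Category.comp_id _).trans (h0.trans (Category.id_comp _).symm))
    ((Category.comp_id _).trans (Category.id_comp _).symm))

/-- Schanuel's lemma. -/
theorem ccls_cx_add_ccls_KP :
    ccls C ρ.cx + ccls C (KP C τ.Q) = ccls C τ.cx + ccls C (KP C ρ.Q) := by
  have := ρ.projective_Q
  have := τ.projective_Q
  obtain ⟨a, ha⟩ : ∃ a : ρ.Q ⟶ τ.Q, a ≫ τ.π = ρ.π := ⟨_, Projective.factorThru_comp _ _⟩
  obtain ⟨b, hb⟩ : ∃ b : τ.Q ⟶ ρ.Q, b ≫ ρ.π = τ.π := ⟨_, Projective.factorThru_comp _ _⟩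
  let e : ρ.Q ⊞ τ.Q ≅ τ.Q ⊞ ρ.Q :=
    { hom := biprod.lift (biprod.snd + (biprod.fst - biprod.snd ≫ b) ≫ a)
        (biprod.fst - biprod.snd ≫ b)
      inv := biprod.lift (biprod.snd + (biprod.fst - biprod.snd ≫ a) ≫ b)
        (biprod.fst - biprod.snd ≫ a)
      hom_inv_id := by ext <;> simp
      inv_hom_id := by ext <;> simp }
  have he : e.hom ≫ biprod.fst ≫ τ.π = biprod.fst ≫ ρ.π := by simp [e, ha, hb]
  rw [← ccls_addProjective ρ τ.projective_Q, ← ccls_addProjective τ ρ.projective_Q]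
  exact ccls_eq_iff.2
    (nonempty_cx_iso (ρ.addProjective τ.projective_Q) (τ.addProjective ρ.projective_Q) e he)

end Schanuel

end TwoTermResolution

namespace DecData

open Z2Cx TwoTermResolution

variable {C : Type u} [SmallCategory C] [Abelian C] (dd : DecData C) {M N : Z2Cx C}
include dd

theorem exists_iso_pairCx (hM0 : Projective M.X0) (hM1 : Projective M.X1) :
    ∃ (ρ : TwoTermResolution (H0 C M)) (τ : TwoTermResolution (H1 C M)),
      Nonempty (M ≅ pairCx ρ τ) := by
  obtain ⟨P, Q, P', Q', f, g, hP, hQ, hP', hQ', _, _, ⟨e⟩, -, -⟩ := dd.spec M hM0 hM1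
  let ρ := ofMono hP hQ f
  let τ := ofMono hP' hQ' g
  exact ⟨ρ.ofIso ((H0PairIso ρ τ).symm ≪≫ (H0MapIso e).symm),
    τ.ofIso ((H1PairIso ρ τ).symm ≪≫ (H1MapIso e).symm), ⟨e⟩⟩

lemma isContractible_of_acyclic (hM : FinCx C M) (hacyclic : Acyclic C M) :
    IsContractible M := by
  obtain ⟨ρ, τ, ⟨e⟩⟩ := dd.exists_iso_pairCx hM.1 hM.2.1
  refine IsZero.of_iso ?_ (toHo.mapIso e ≪≫ mapDsum toHo _ _)
  exact (biprod_isZero_iff _ _).2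
    ⟨ρ.isContractible_cx hacyclic.1, (τ.isContractible_cx hacyclic.2).dagger⟩

lemma finite_toHo_hom (hN : FinCx C N) : Finite (toHo.obj M ⟶ toHo.obj N) := by
  obtain ⟨ρ, τ, ⟨e⟩⟩ := dd.exists_iso_pairCx hN.1 hN.2.1
  have := ρ.finite_toHo_hom_cx (M := M) hN.2.2.1
  have := τ.finite_toHo_hom_dagger_cx (M := M) hN.2.2.2
  let e' : toHo.obj N ≅ toHo.obj ρ.cx ⊞ toHo.obj (dagger C τ.cx) :=
    toHo.mapIso e ≪≫ mapDsum toHo _ _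
  refine Finite.of_injective
    (fun x => ((x ≫ e'.hom) ≫ biprod.fst, (x ≫ e'.hom) ≫ biprod.snd)) fun x y h => ?_
  exact (cancel_mono e'.hom).1
    (biprod.hom_ext _ _ (congrArg Prod.fst h) (congrArg Prod.snd h))

end DecData

/-! ### The Grothendieck group -/

namespace K0

open Z2Cx ZeroObject

variable {C : Type u} [SmallCategory C] [Abelian C]

lemma cls_of_shortExact {S : ShortComplex C} (hS : S.ShortExact) :
    cls C S.X₂ = cls C S.X₁ + cls C S.X₃ := by
  refine (QuotientAddGroup.eq_iff_sub_mem.2 (AddSubgroup.subset_closure ?_) :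
    (QuotientAddGroup.mk (.of S.X₂) : K0 C) = QuotientAddGroup.mk (.of S.X₁ + .of S.X₃))
  exact ⟨S, hS, (sub_sub _ _ _).symm⟩

lemma cls_biprod (X Y : C) : cls C (X ⊞ Y) = cls C X + cls C Y :=
  cls_of_shortExact (ShortComplex.Splitting.ofHasBinaryBiproduct X Y).shortExact

lemma cls_of_isZero {X : C} (hX : IsZero X) : cls C X = 0 := by
  have h := cls_of_shortExact (S := .mk (𝟙 X) (𝟙 X) (hX.eq_of_src _ _))
    { exact := ShortComplex.exact_of_isZero_X₂ _ hX
      mono_f := inferInstanceAs (Mono (𝟙 X))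
      epi_g := inferInstanceAs (Epi (𝟙 X)) }
  exact left_eq_add.1 h

lemma cls_congr {X Y : C} (e : X ≅ Y) : cls C X = cls C Y := by
  have h := cls_of_shortExact (S := .mk e.hom (0 : Y ⟶ 0) comp_zero)
    { exact := (ShortComplex.exact_iff_epi _ rfl).2 (inferInstanceAs (Epi e.hom))
      mono_f := inferInstanceAs (Mono e.hom)
      epi_g := ⟨fun _ _ _ => (isZero_zero C).eq_of_src _ _⟩ }
  rw [cls_of_isZero (isZero_zero C), add_zero] at h
  exact h.symm

lemma cls_cokernel {X Y : C} (f : X ⟶ Y) [Mono f] :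
    cls C (cokernel f) = cls C Y - cls C X :=
  eq_sub_of_add_eq' (cls_of_shortExact (S := .mk f (cokernel.π f) (cokernel.condition f))
    { exact := ShortComplex.exact_cokernel f }).symm

/-- The class of `F.obj M`, for an additive functor `F`, as a function of the isomorphism class of
a complex `M`. -/
def clsHom (F : Z2Cx C ⥤ C) [F.Additive] : CxCls C →+ K0 C where
  toFun := Quot.lift (fun M => cls C (F.obj M)) fun _ _ ⟨e⟩ => cls_congr (F.mapIso e)
  map_zero' := cls_of_isZero (F.map_isZero isZero_zeroCx)
  map_add' := by
    rintro ⟨M⟩ ⟨N⟩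
    exact (cls_congr (mapDsum F M N)).trans (cls_biprod _ _)

lemma cokernel_map_add {X Y X' Y' : C} {d : X ⟶ Y} {d' : X' ⟶ Y'} {a b : X ⟶ X'} {a' b' : Y ⟶ Y'}
    (ha : d ≫ a' = a ≫ d') (hb : d ≫ b' = b ≫ d') (hab : d ≫ (a' + b') = (a + b) ≫ d') :
    cokernel.map d d' (a + b) (a' + b') hab =
      cokernel.map d d' a a' ha + cokernel.map d d' b b' hb := by
  rw [← cancel_epi (cokernel.π d), Preadditive.comp_add]
  simp

variable (C) in
/-- The degree `0` term of a complex. -/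
def X0Functor : Z2Cx C ⥤ C where
  obj M := M.X0
  map f := Hom.f0 f

instance : (X0Functor C).Additive where

variable (C) in
/-- The cokernel of the differential with target in degree `0`. -/
def coker1Functor : Z2Cx C ⥤ C where
  obj M := cokernel M.d1
  map {M N} f := cokernel.map M.d1 N.d1 (Hom.f1 f) (Hom.f0 f) (Hom.comm1 f)

instance : (coker1Functor C).Additive where
  map_add {_ _ f g} := cokernel_map_add (Hom.comm1 f) (Hom.comm1 g) (Hom.comm1 (f + g))

/-- The class in `K0 C` of the degree `0` boundaries of a complex. -/
def boundaryCls : CxCls C →+ K0 C := clsHom (X0Functor C) - clsHom (coker1Functor C)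

lemma boundaryCls_Cf {P Q : C} (f : P ⟶ Q) [Mono f] :
    boundaryCls (ccls C (Cf C f)) = cls C P :=
  (congrArg (cls C Q - ·) (cls_cokernel f)).trans (sub_sub_cancel _ _)

lemma boundaryCls_dagger_Cf {P Q : C} (f : P ⟶ Q) :
    boundaryCls (ccls C (dagger C (Cf C f))) = 0 :=
  sub_eq_zero.2 (cls_congr (cokernelIsoOfEq (neg_zero (G := Q ⟶ P)) ≪≫ cokernelZeroIsoTarget)).symm

/-- The classes in `K0 C` of the boundaries of a complex in degrees `0` and `1`. -/
def boundaryPair : CxCls C →+ K0 C × K0 C := boundaryCls.prod (boundaryCls.comp daggerCls)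

lemma boundaryPair_KP (P : C) : boundaryPair (ccls C (KP C P)) = (cls C P, 0) :=
  Prod.ext (boundaryCls_Cf (𝟙 P)) (boundaryCls_dagger_Cf (𝟙 P))

lemma boundaryPair_dagger_KP (P : C) :
    boundaryPair (ccls C (dagger C (KP C P))) = (0, cls C P) := by
  refine Prod.ext (boundaryCls_dagger_Cf (𝟙 P)) ?_
  change boundaryCls (ccls C (dagger C (dagger C (KP C P)))) = cls C P
  rw [dagger_dagger]
  exact boundaryCls_Cf (𝟙 P)

section Projective

variable [EnoughProjectives C] (dd : DecData C)
include dd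

lemma exists_cls_eq_sub (X : C) :
    ∃ P Q : C, Projective P ∧ Projective Q ∧ cls C X = cls C Q - cls C P := by
  let d := Projective.d (Projective.π X)
  have hd := exact_d_f (Projective.π X)
  obtain ⟨ρ, τ, ⟨e⟩⟩ := dd.exists_iso_pairCx (M := Cf C d) (Projective.projective_over _)
    (Projective.projective_over _)
  have hd1 : boundaryCls (ccls C (Cf C d)) = cls C (Projective.over X) - cls C X :=
    congrArg (cls C (Projective.over X) - ·)
      (cls_congr ((cokernelIsCokernel d).coconePointUniqueUpToIso hd.gIsCokernel))
  have hρ : boundaryCls (ccls C (Cf C d)) = cls C ρ.P := by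
    rw [ccls_congr e, ccls_dsum, map_add, boundaryCls_Cf, boundaryCls_dagger_Cf, add_zero]
  exact ⟨ρ.P, _, ρ.projective_P, Projective.projective_over X, by rw [← hρ, hd1, sub_sub_cancel]⟩

lemma exists_eq_sub (a : K0 C) :
    ∃ P Q : C, Projective P ∧ Projective Q ∧ a = cls C Q - cls C P := by
  obtain ⟨x, rfl⟩ := QuotientAddGroup.mk_surjective a
  induction x using FreeAbelianGroup.induction_on with
  | zero => exact ⟨0, 0, inferInstance, inferInstance, (sub_self _).symm⟩
  | of X => exact exists_cls_eq_sub dd X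
  | neg X =>
    obtain ⟨P, Q, hP, hQ, h⟩ := exists_cls_eq_sub dd X
    exact ⟨Q, P, hQ, hP, (congrArg Neg.neg h).trans (neg_sub _ _)⟩
  | add x y hx hy =>
    obtain ⟨P, Q, hP, hQ, h⟩ := hx
    obtain ⟨P', Q', hP', hQ', h'⟩ := hy
    refine ⟨P ⊞ P', Q ⊞ Q', inferInstance, inferInstance, ?_⟩
    rw [QuotientAddGroup.mk_add, h, h', cls_biprod, cls_biprod, add_sub_add_comm]

lemma exists_common_eq_sub (s : Finset (K0 C)) :
    ∃ P : C, Projective P ∧ ∀ a ∈ s, ∃ Q : C, Projective Q ∧ a = cls C Q - cls C P := by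
  induction s using Finset.induction_on with
  | empty => exact ⟨0, inferInstance, by simp⟩
  | insert a s _ ih =>
    obtain ⟨P, hP, h⟩ := ih
    obtain ⟨P', Q', hP', hQ', h'⟩ := exists_eq_sub dd a
    refine ⟨P ⊞ P', inferInstance, fun b hb => ?_⟩
    rcases Finset.mem_insert.1 hb with rfl | hb
    · exact ⟨P ⊞ Q', inferInstance, by rw [h', cls_biprod, cls_biprod, add_sub_add_left_eq_sub]⟩
    · obtain ⟨Q, hQ, e⟩ := h b hb
      exact ⟨Q ⊞ P', inferInstance, by rw [e, cls_biprod, cls_biprod, add_sub_add_right_eq_sub]⟩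

end Projective

end K0

/-! ### Classes of complexes of projectives -/

section IsoA

variable {C : Type u} [SmallCategory C]

lemma isoA_mk_eq_iff {A B : {A : C // IsFinHom C A}} :
    (Quot.mk _ A : IsoA C) = Quot.mk _ B ↔ Nonempty (A.1 ≅ B.1) := by
  have h : Equivalence fun A B : {A : C // IsFinHom C A} => Nonempty (A.1 ≅ B.1) :=
    ⟨fun _ => ⟨Iso.refl _⟩, fun ⟨e⟩ => ⟨e.symm⟩, fun ⟨e⟩ ⟨e'⟩ => ⟨e ≪≫ e'⟩⟩
  exact Equivalence.quot_mk_eq_iff h A B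

end IsoA

namespace Z2Cx

variable {C : Type u} [SmallCategory C] [Abelian C]

lemma isContractible_KP {P : C} (hP : Projective P) : IsContractible (KP C P) :=
  (TwoTermResolution.ofMono hP hP (𝟙 P)).isContractible_cx (isZero_cokernel_of_epi _)

end Z2Cx

namespace FCx

variable {C : Type u} [SmallCategory C] [Abelian C]

/-- The complex `K_P` as an object of `C_fin(P)`. -/
def KP {P : C} (hP : Projective P) : FCx C := ⟨Z2Cx.KP C P, .KP hP⟩

/-- The shift on `C_fin(P)`. -/
def dagger (M : FCx C) : FCx C := ⟨Z2Cx.dagger C M.1, M.2.dagger⟩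

/-- The complex `C_A` of a resolution of `A`, as an object of `C_fin(P)`. -/
def ofResolution {A : C} (ρ : TwoTermResolution A) (hA : IsFinHom C A) : FCx C :=
  ⟨ρ.cx, ρ.finCx_cx hA⟩

end FCx

namespace FCls

open Z2Cx

variable {C : Type u} [SmallCategory C] [Abelian C]

lemma fc2c_injective : Function.Injective (fc2c C) := by
  rintro ⟨M⟩ ⟨N⟩ h
  exact Quot.sound (ccls_eq_iff.1 h)

lemma exists_fcls_eq (m : FCls C) : ∃ M : FCx C, fcls C M = m := Quot.exists_rep m

instance : Zero (FCls C) := ⟨fcls C ⟨zeroCx C, .zeroCx⟩⟩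

instance : Add (FCls C) :=
  ⟨Quot.map₂ (fun M N => ⟨dsum C M.1 N.1, M.2.dsum N.2⟩)
    (fun _ _ _ ⟨e⟩ => ⟨dsumCongr (Iso.refl _) e⟩) fun _ _ _ ⟨e⟩ => ⟨dsumCongr e (Iso.refl _)⟩⟩

lemma fc2c_zero : fc2c C 0 = 0 := rfl

lemma fc2c_add (m n : FCls C) : fc2c C (m + n) = fc2c C m + fc2c C n := by
  obtain ⟨M⟩ := m
  obtain ⟨N⟩ := n
  rfl

instance : AddCommMonoid (FCls C) where
  add_assoc a b c := fc2c_injective (by simp only [fc2c_add, add_assoc])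
  zero_add a := fc2c_injective (by simp only [fc2c_add, fc2c_zero, zero_add])
  add_zero a := fc2c_injective (by simp only [fc2c_add, fc2c_zero, add_zero])
  add_comm a b := fc2c_injective (by simp only [fc2c_add, add_comm])
  nsmul := nsmulRec

/-- The class of the contractible complex `K_P ⊕ K_{P'}^†`. -/
def ofProjectives {P P' : C} (hP : Projective P) (hP' : Projective P') : FCls C :=
  fcls C (.KP hP) + fcls C (FCx.KP hP').dagger

lemma boundaryPair_ofProjectives {P P' : C} (hP : Projective P) (hP' : Projective P') :
    K0.boundaryPair (fc2c C (ofProjectives hP hP')) = (K0.cls C P, K0.cls C P') := by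
  rw [ofProjectives, fc2c_add, map_add]
  change K0.boundaryPair (ccls C (KP C P)) + K0.boundaryPair (ccls C (dagger C (KP C P'))) = _
  rw [K0.boundaryPair_KP, K0.boundaryPair_dagger_KP, Prod.mk_add_mk, add_zero, zero_add]

/-- The pair of isomorphism classes of the homology objects of a complex. -/
def homology : FCls C → IsoA C × IsoA C :=
  Quot.lift (fun M => (Quot.mk _ ⟨H0 C M.1, M.2.2.2.1⟩, Quot.mk _ ⟨H1 C M.1, M.2.2.2.2⟩))
    fun _ _ ⟨e⟩ => Prod.ext (Quot.sound ⟨H0MapIso e⟩) (Quot.sound ⟨H1MapIso e⟩)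

lemma homology_add_of_acyclic (m : FCls C) {K : FCx C} (hK : Acyclic C K.1) :
    homology (m + fcls C K) = homology m := by
  obtain ⟨M⟩ := m
  exact Prod.ext
    (Quot.sound ⟨H0DsumIso M.1 K.1 ≪≫ (isoBiprodZero hK.1).symm⟩)
    (Quot.sound ⟨H1DsumIso M.1 K.1 ≪≫ (isoBiprodZero hK.2).symm⟩)

lemma homology_add_ofProjectives (m : FCls C) {P P' : C} (hP : Projective P)
    (hP' : Projective P') : homology (m + ofProjectives hP hP') = homology m := by
  rw [ofProjectives, ← add_assoc,
    homology_add_of_acyclic _ (K := (FCx.KP hP').dagger) (acyclic_KP P').dagger,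
    homology_add_of_acyclic _ (K := .KP hP) (acyclic_KP P)]

lemma endCard_add_ofProjectives (m : FCls C) {P P' : C} (hP : Projective P)
    (hP' : Projective P') :
    endCard (fc2c C (m + ofProjectives hP hP')) = endCard (fc2c C m) := by
  rw [ofProjectives, ← add_assoc, fc2c_add, fc2c_add]
  exact (endCard_add_of_isContractible _ (isContractible_KP hP').dagger).trans
    (endCard_add_of_isContractible _ (isContractible_KP hP))

variable (ρ : ∀ a : IsoA C, TwoTermResolution (Quot.out a).1)

/-- The class of the complex `C_A ⊕ C_B^†` for a pair `(A, B)` of objects of `A`, formed with the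
chosen resolutions `ρ`. -/
def ofPair (i : IsoA C × IsoA C) : FCls C :=
  fcls C (.ofResolution (ρ i.1) (Quot.out i.1).2) +
    fcls C (FCx.ofResolution (ρ i.2) (Quot.out i.2).2).dagger

lemma homology_ofPair (i : IsoA C × IsoA C) : homology (ofPair ρ i) = i :=
  Prod.ext ((Quot.sound ⟨(ρ i.1).H0PairIso (ρ i.2)⟩).trans (Quot.out_eq i.1))
    ((Quot.sound ⟨(ρ i.1).H1PairIso (ρ i.2)⟩).trans (Quot.out_eq i.2))

theorem exists_add_ofProjectives_eq (dd : DecData C) (m : FCls C) :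
    ∃ (P P' Q Q' : C) (hP : Projective P) (hP' : Projective P') (hQ : Projective Q)
      (hQ' : Projective Q'),
      m + ofProjectives hP hP' = ofPair ρ (homology m) + ofProjectives hQ hQ' := by
  obtain ⟨M⟩ := m
  obtain ⟨σ, τ, ⟨e⟩⟩ := dd.exists_iso_pairCx M.2.1 M.2.2.1
  let i := homology (fcls C M)
  obtain ⟨e0⟩ : Nonempty (H0 C M.1 ≅ (Quot.out i.1).1) :=
    isoA_mk_eq_iff.1 (Quot.out_eq i.1).symm
  obtain ⟨e1⟩ : Nonempty (H1 C M.1 ≅ (Quot.out i.2).1) :=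
    isoA_mk_eq_iff.1 (Quot.out_eq i.2).symm
  refine ⟨_, _, _, _, (ρ i.1).projective_Q, (ρ i.2).projective_Q, σ.projective_Q,
    τ.projective_Q, fc2c_injective ?_⟩
  have hM : ccls C M.1 = ccls C σ.cx + daggerCls (ccls C τ.cx) := ccls_congr e
  have h0 := (σ.ofIso e0).ccls_cx_add_ccls_KP (ρ i.1)
  have h1 := congrArg daggerCls ((τ.ofIso e1).ccls_cx_add_ccls_KP (ρ i.2))
  rw [map_add, map_add] at h1
  change ccls C M.1 + (ccls C (KP C (ρ i.1).Q) + daggerCls (ccls C (KP C (ρ i.2).Q))) =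
    ccls C (ρ i.1).cx + daggerCls (ccls C (ρ i.2).cx) +
      (ccls C (KP C σ.Q) + daggerCls (ccls C (KP C τ.Q)))
  rw [hM, add_add_add_comm, add_add_add_comm (ccls C (ρ i.1).cx)]
  exact congrArg₂ _ h0 h1

/-- The number of endomorphisms of `C_A ⊕ C_B^†` in the homotopy category, for `i = (A, B)`. The
basis of `DH_red(R)` is filtered by this weight, and Hall products are triangular for it. -/
def weight (i : IsoA C × IsoA C) : ℕ := endCard (fc2c C (ofPair ρ i))

lemma weight_homology (dd : DecData C) (m : FCls C) :
    weight ρ (homology m) = endCard (fc2c C m) := by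
  obtain ⟨P, P', Q, Q', hP, hP', hQ, hQ', h⟩ := exists_add_ofProjectives_eq ρ dd m
  rw [weight, ← endCard_add_ofProjectives _ hQ hQ', ← h, endCard_add_ofProjectives]

end FCls

/-! ### Bases of the localized and reduced Hall algebras -/

namespace DHSetting

open Z2Cx Finsupp

variable (S : DHSetting k R)

section HallProduct

lemma hVal_ne_zero {M N : Z2Cx R} (hN : FinCx R N) : hVal S.ed S.dd M N ≠ 0 := by
  have := hN.finite_hom_Hcx (M := M)
  have : Nonempty (Hcx R M ⟶ Hcx R N) := ⟨0⟩
  have hq : (0 : ℝ) < Fintype.card k := Nat.cast_pos.2 Fintype.card_pos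
  exact mul_ne_zero (Real.rpow_pos_of_pos hq _).ne' (Nat.cast_ne_zero.2 Nat.card_pos.ne')

lemma rpow_ne_zero (x : ℝ) : ((S.v ^ x : ℝ) : ℂ) ≠ 0 :=
  Complex.ofReal_ne_zero.2 (Real.rpow_pos_of_pos S.v_pos x).ne'

lemma mulH_single_apply_ne_zero_iff (M N : FCx R) (c : FCls R) :
    S.mulH (single (fcls R M) 1) (single (fcls R N) 1) c ≠ 0 ↔
      extCount R M.1 N.1 (fc2c R c) ≠ 0 := by
  rw [S.mulH_single, hallCoeff, Complex.ofReal_ne_zero, div_ne_zero_iff, mul_ne_zero_iff,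
    Nat.cast_ne_zero]
  exact ⟨fun h => h.1.2, fun h =>
    ⟨⟨(Real.rpow_pos_of_pos S.v_pos _).ne', h⟩, S.hVal_ne_zero N.2⟩⟩

theorem mulH_single_apply_add_ne_zero (m n : FCls R) :
    S.mulH (single m 1) (single n 1) (m + n) ≠ 0 := by
  obtain ⟨M⟩ := m
  obtain ⟨N⟩ := n
  have := M.2.1
  have := M.2.2.1
  have := S.dd.finite_toHo_hom (M := M.1) M.2
  have := S.dd.finite_toHo_hom (M := M.1) N.2
  have := S.dd.finite_toHo_hom (M := N.1) M.2
  have := S.dd.finite_toHo_hom (M := N.1) N.2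
  have hone : extCount R M.1 N.1 (ccls R M.1 + ccls R N.1) = 1 :=
    extCount_add_eq_one fun s hs => s.isSplit_of_ccls_E hs
  exact (S.mulH_single_apply_ne_zero_iff M N _).2 (hone.trans_ne one_ne_zero)

theorem endCard_lt_of_mulH_single_apply_ne_zero {m n c : FCls R}
    (h : S.mulH (single m 1) (single n 1) c ≠ 0) (hc : c ≠ m + n) :
    endCard (fc2c R c) < endCard (fc2c R (m + n)) := by
  obtain ⟨M⟩ := m
  obtain ⟨N⟩ := n
  have := M.2.1
  have := M.2.2.1
  have := S.dd.finite_toHo_hom (M := M.1) M.2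
  have := S.dd.finite_toHo_hom (M := M.1) N.2
  have := S.dd.finite_toHo_hom (M := N.1) M.2
  have := S.dd.finite_toHo_hom (M := N.1) N.2
  exact endCard_lt_of_extCount_ne_zero ((S.mulH_single_apply_ne_zero_iff M N c).1 h)
    fun hc' => hc (FCls.fc2c_injective hc')

lemma exists_mulH_single_of_acyclic (m : FCls R) {K : FCx R} (hK : Acyclic R K.1) :
    ∃ α : ℂ, α ≠ 0 ∧ S.mulH (single m 1) (single (fcls R K) 1) = single (m + fcls R K) α := by
  obtain ⟨M⟩ := m
  have := M.2.1
  have := M.2.2.1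
  refine ⟨_, S.mulH_single_apply_add_ne_zero _ _, eq_single_iff.2 ⟨fun c hc => ?_, rfl⟩⟩
  rw [mem_support_iff] at hc
  exact Finset.mem_singleton.2 <| FCls.fc2c_injective <| eq_add_of_extCount_ne_zero
    (S.dd.isContractible_of_acyclic K.2 hK) ((S.mulH_single_apply_ne_zero_iff M K c).1 hc)

end HallProduct

section StdForm

/-- The map `x ↦ x ⋆ K_α ⋆ K_β^†` from the Hall algebra to its localization, for `p = (α, β)`. -/
def stdForm (p : K0 R × K0 R) : (FCls R →₀ ℂ) →ₗ[ℂ] S.D := S.mulD.flip (S.KK p) ∘ₗ S.loc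

/-- The scalar by which `K_α ⋆ K_β^†` commutes past `[M•]`, for `p = (α, β)`. -/
def commScalar (p : K0 R × K0 R) (M : FCx R) : ℂ :=
  ((S.v ^ ((sForm k R S.ed (p.1 - p.2) (clsOf R M.1) : ℚ) : ℝ) : ℝ) : ℂ)

lemma commScalar_ne_zero (p : K0 R × K0 R) (M : FCx R) : S.commScalar p M ≠ 0 :=
  S.rpow_ne_zero _

lemma commScalar_diag (a : K0 R) (M : FCx R) : S.commScalar (a, a) M = 1 := by
  simp [commScalar, sForm]

lemma stdForm_zero (x : FCls R →₀ ℂ) : S.stdForm 0 x = S.loc x := by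
  change S.mulD (S.loc x) (S.KK 0) = S.loc x
  rw [S.KK_zero, S.mul_one]

lemma stdForm_single_zero (p : K0 R × K0 R) : S.stdForm p (single 0 1) = S.KK p := by
  change S.mulD (S.loc (single (fcls R ⟨zeroCx R, .zeroCx⟩) 1)) (S.KK p) = S.KK p
  rw [S.loc_one, S.one_mul]

lemma stdForm_mul_stdForm (x : FCls R →₀ ℂ) (M : FCx R) (p p' : K0 R × K0 R) :
    S.mulD (S.stdForm p x) (S.stdForm p' (single (fcls R M) 1)) =
      S.commScalar p M • S.stdForm (p + p') (S.mulH x (single (fcls R M) 1)) :=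
  S.mul_general x M p.1 p.2 p'.1 p'.2

lemma stdForm_mul_KK (x : FCls R →₀ ℂ) (p p' : K0 R × K0 R) :
    S.mulD (S.stdForm p x) (S.KK p') = S.stdForm (p + p') x := by
  have hscalar : S.commScalar p ⟨zeroCx R, .zeroCx⟩ = 1 := by
    have : clsOf R (zeroCx R) = 0 := sub_self _
    simp [commScalar, sForm, this]
  have h := S.stdForm_mul_stdForm x ⟨zeroCx R, .zeroCx⟩ p p'
  rw [hscalar, one_smul] at h
  change S.mulD _ (S.stdForm p' (single 0 1)) =
    S.mulD (S.loc (S.mulH x (single (fcls R ⟨zeroCx R, .zeroCx⟩) 1))) _ at h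
  rwa [stdForm_single_zero, ← S.loc_mul, S.loc_one, S.mul_one] at h

lemma KK_mul_stdForm (M : FCx R) (p p' : K0 R × K0 R) :
    S.mulD (S.KK p) (S.stdForm p' (single (fcls R M) 1)) =
      S.commScalar p M • S.stdForm (p + p') (single (fcls R M) 1) := by
  have h := S.stdForm_mul_stdForm (single 0 1) M p p'
  change _ = S.commScalar p M • S.mulD
    (S.loc (S.mulH (single (fcls R ⟨zeroCx R, .zeroCx⟩) 1) (single (fcls R M) 1))) _ at h
  rwa [stdForm_single_zero, ← S.loc_mul, S.loc_one, S.one_mul] at h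

lemma exists_stdForm_single_add_of_acyclic (m : FCls R) {K : FCx R} (hK : Acyclic R K.1)
    {q : K0 R × K0 R} (hq : S.loc (single (fcls R K) 1) = S.KK q) :
    ∃ c : ℂ, c ≠ 0 ∧ ∀ p,
      S.stdForm p (single (m + fcls R K) 1) = c • S.stdForm (q + p) (single m 1) := by
  obtain ⟨α, hα, h⟩ := S.exists_mulH_single_of_acyclic m hK
  refine ⟨α⁻¹, inv_ne_zero hα, fun p => (eq_inv_smul_iff₀ hα).2 ?_⟩
  rw [← S.stdForm_mul_KK, ← map_smul, smul_single_one, ← h]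
  change S.mulD (S.loc _) _ = S.mulD (S.mulD (S.loc _) _) _
  rw [← S.loc_mul, hq]

lemma exists_stdForm_single_add_ofProjectives (m : FCls R) {P P' : R} (hP : Projective P)
    (hP' : Projective P') :
    ∃ c : ℂ, c ≠ 0 ∧ ∀ p, S.stdForm p (single (m + FCls.ofProjectives hP hP') 1) =
      c • S.stdForm (p + (K0.cls R P, K0.cls R P')) (single m 1) := by
  obtain ⟨c, hc, h⟩ := S.exists_stdForm_single_add_of_acyclic m (K := .KP hP)
    (acyclic_KP P) (S.KK_P P hP _)
  obtain ⟨c', hc', h'⟩ := S.exists_stdForm_single_add_of_acyclic (m + fcls R (.KP hP))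
    (K := (FCx.KP hP').dagger) (acyclic_KP P').dagger (S.KK_Pd P' hP' _)
  refine ⟨c' * c, mul_ne_zero hc' hc, fun p => ?_⟩
  have hp : (K0.cls R P, 0) + ((0, K0.cls R P') + p) = p + (K0.cls R P, K0.cls R P') := by
    ext <;> simp [add_comm]
  rw [FCls.ofProjectives, ← add_assoc, h', h, smul_smul, hp]

end StdForm

section Basis

variable (ρ : ∀ a : IsoA R, TwoTermResolution (Quot.out a).1)

/-- The elements `[C_A ⊕ C_B^†] ⋆ K_α ⋆ K_β^†`, which form a basis of `DH(R)`. -/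
def basisElt (i : (IsoA R × IsoA R) × (K0 R × K0 R)) : S.D :=
  S.stdForm i.2 (single (FCls.ofPair ρ i.1) 1)

theorem exists_stdForm_single_eq_smul_basisElt (m : FCls R) :
    ∃ c : ℂ, c ≠ 0 ∧ ∃ s, ∀ p,
      S.stdForm p (single m 1) = c • S.basisElt ρ (m.homology, p + s) := by
  obtain ⟨P, P', Q, Q', hP, hP', hQ, hQ', h⟩ := FCls.exists_add_ofProjectives_eq ρ S.dd m
  obtain ⟨c, hc, h1⟩ := S.exists_stdForm_single_add_ofProjectives m hP hP'
  obtain ⟨c', hc', h2⟩ :=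
    S.exists_stdForm_single_add_ofProjectives (FCls.ofPair ρ m.homology) hQ hQ'
  refine ⟨c⁻¹ * c', mul_ne_zero (inv_ne_zero hc) hc',
    (K0.cls R Q, K0.cls R Q') - (K0.cls R P, K0.cls R P'), fun p => ?_⟩
  have h3 := h1 (p - (K0.cls R P, K0.cls R P'))
  rw [h, h2, sub_add_cancel] at h3
  rw [mul_smul, eq_inv_smul_iff₀ hc, ← h3, basisElt, sub_add_eq_add_sub, add_sub_assoc]

theorem span_basisElt : ⊤ ≤ Submodule.span ℂ (Set.range (S.basisElt ρ)) := by
  rintro d -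
  obtain ⟨x, a, b, rfl⟩ := S.span d
  change S.stdForm (a, b) x ∈ _
  induction x using Finsupp.induction_linear with
  | zero => simp only [map_zero, zero_mem]
  | add f g hf hg => rw [map_add]; exact add_mem hf hg
  | single m z =>
    obtain ⟨c, -, s, h⟩ := S.exists_stdForm_single_eq_smul_basisElt ρ m
    rw [← smul_single_one, map_smul, h]
    exact Submodule.smul_mem _ _ (Submodule.smul_mem _ _ (Submodule.subset_span ⟨_, rfl⟩))

theorem linearIndependent_loc_single {ι : Type*} (n : ι → FCls R)
    (hn : ∀ K : FCx R, Acyclic R K.1 → Function.Injective fun i => n i + fcls R K) :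
    LinearIndependent ℂ fun i => S.loc (single (n i) 1) := by
  rw [linearIndependent_iff]
  intro l hl
  change linearCombination ℂ (S.loc ∘ fun i => single (n i) 1) l = 0 at hl
  rw [← Finsupp.apply_linearCombination, S.loc_ker] at hl
  obtain ⟨K, hKfin, hK, hl⟩ := hl
  let K' : FCx R := ⟨K, hKfin⟩
  choose α hα h using fun m => S.exists_mulH_single_of_acyclic m (K := K') hK
  have hindep : LinearIndependent ℂ fun i => single (n i + fcls R K') (α (n i)) := by
    have := ((linearIndependent_single_one ℂ (FCls R)).comp _ (hn K' hK)).units_smul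
      fun i => Units.mk0 (α (n i)) (hα _)
    convert this using 1
    exact funext fun i => (smul_single_one _ _).symm
  rw [linearIndependent_iff] at hindep
  refine hindep l ?_
  have hfun : (fun i => single (n i + fcls R K') (α (n i))) =
      S.mulH.flip (single (fcls R K') 1) ∘ fun i => single (n i) 1 :=
    funext fun i => (h (n i)).symm
  rw [hfun, ← Finsupp.apply_linearCombination]
  exact hl

theorem linearIndependent_basisElt : LinearIndependent ℂ (S.basisElt ρ) := by
  rw [linearIndependent_iff_finset_linearIndependent]
  intro t
  obtain ⟨P, -, hPt⟩ := K0.exists_common_eq_sub S.dd (t.image fun i => i.2.1)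
  obtain ⟨P', -, hPt'⟩ := K0.exists_common_eq_sub S.dd (t.image fun i => i.2.2)
  choose Q hQ hQeq using fun i : t => hPt i.1.2.1 (Finset.mem_image_of_mem _ i.2)
  choose Q' hQ' hQeq' using fun i : t => hPt' i.1.2.2 (Finset.mem_image_of_mem _ i.2)
  let n (i : t) : FCls R := FCls.ofPair ρ i.1.1 + FCls.ofProjectives (hQ i) (hQ' i)
  choose c hc h using fun i : t =>
    S.exists_stdForm_single_add_ofProjectives (FCls.ofPair ρ i.1.1) (hQ i) (hQ' i)
  have hmul (i : t) : S.mulD (S.basisElt ρ i) (S.KK (K0.cls R P, K0.cls R P')) =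
      (c i)⁻¹ • S.loc (single (n i) 1) := by
    have hi : i.1.2 + (K0.cls R P, K0.cls R P') = (K0.cls R (Q i), K0.cls R (Q' i)) :=
      Prod.ext (eq_sub_iff_add_eq.1 (hQeq i)) (eq_sub_iff_add_eq.1 (hQeq' i))
    rw [eq_inv_smul_iff₀ (hc i), basisElt, stdForm_mul_KK, hi, ← stdForm_zero, h, zero_add]
  have hinj (K : FCx R) (hK : Acyclic R K.1) : Function.Injective fun i => n i + fcls R K := by
    intro i j hij
    have hhom : i.1.1 = j.1.1 := by
      simpa only [n, FCls.homology_add_of_acyclic _ hK, FCls.homology_add_ofProjectives,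
        FCls.homology_ofPair] using congrArg FCls.homology hij
    have hbd := congrArg (fun m => K0.boundaryPair (fc2c R m)) hij
    simp only [n, FCls.fc2c_add, map_add, hhom, add_left_inj, add_right_inj,
      FCls.boundaryPair_ofProjectives, Prod.mk.injEq] at hbd
    refine Subtype.ext (Prod.ext hhom (Prod.ext ?_ ?_))
    · rw [hQeq, hQeq, hbd.1]
    · rw [hQeq', hQeq', hbd.2]
  refine LinearIndependent.of_comp (S.mulD.flip (S.KK (K0.cls R P, K0.cls R P'))) ?_
  have := (S.linearIndependent_loc_single n hinj).units_smul
    fun i => Units.mk0 (c i)⁻¹ (inv_ne_zero (hc i))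
  convert this using 1
  exact funext hmul

end Basis

section Reduced

/-- The quotient map from the localized Hall algebra to the reduced one. -/
def toRed : S.D →ₗ[ℂ] DHred S := (redIdeal S).mkQ

lemma toRed_surjective : Function.Surjective S.toRed := (redIdeal S).mkQ_surjective

lemma KK_diag_sub_one_mul_stdForm (a : K0 R) (p : K0 R × K0 R) (y : FCls R →₀ ℂ) :
    S.mulD (S.KK (a, a) - S.one) (S.stdForm p y) =
      S.stdForm (p + (a, a)) y - S.stdForm p y := by
  induction y using Finsupp.induction_linear with
  | zero => simp only [map_zero, sub_zero]
  | add y z hy hz => simp only [map_add, hy, hz]; abel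
  | single m z =>
    obtain ⟨M, rfl⟩ := FCls.exists_fcls_eq m
    have h := S.KK_mul_stdForm M (a, a) p
    rw [commScalar_diag, one_smul, add_comm] at h
    rw [← smul_single_one, map_smul, map_smul, map_smul, map_sub, LinearMap.sub_apply,
      S.one_mul, h, smul_sub]

lemma toRed_stdForm_add_diag {P : R} (hP : Projective P) (p : K0 R × K0 R) (y : FCls R →₀ ℂ) :
    S.toRed (S.stdForm (p + (K0.cls R P, K0.cls R P)) y) = S.toRed (S.stdForm p y) := by
  rw [← sub_eq_zero, ← map_sub, ← KK_diag_sub_one_mul_stdForm]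
  exact (Submodule.Quotient.mk_eq_zero _).2
    (Submodule.subset_span ⟨S.one, S.stdForm p y, P, hP, (S.one_mul _).symm⟩)

variable (ρ : ∀ a : IsoA R, TwoTermResolution (Quot.out a).1)

/-- The linear map `DH(R) → ⨁ ℂ` sending `[C_A ⊕ C_B^†] ⋆ K_α ⋆ K_β^†` to the basis vector indexed
by `((A, B), α - β)`. -/
def redCoord : S.D →ₗ[ℂ] ((IsoA R × IsoA R) × K0 R →₀ ℂ) :=
  (Module.Basis.mk (S.linearIndependent_basisElt ρ) (S.span_basisElt ρ)).constr ℂ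
    fun i => single (i.1, i.2.1 - i.2.2) 1

lemma redCoord_basisElt (i : (IsoA R × IsoA R) × (K0 R × K0 R)) :
    S.redCoord ρ (S.basisElt ρ i) = single (i.1, i.2.1 - i.2.2) 1 := by
  have h := (Module.Basis.mk (S.linearIndependent_basisElt ρ) (S.span_basisElt ρ)).constr_basis ℂ
    (fun i => single (i.1, i.2.1 - i.2.2) (1 : ℂ)) i
  rwa [Module.Basis.mk_apply] at h

lemma redCoord_stdForm_add_diag (p : K0 R × K0 R) (a : K0 R) (y : FCls R →₀ ℂ) :
    S.redCoord ρ (S.stdForm (p + (a, a)) y) = S.redCoord ρ (S.stdForm p y) := by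
  induction y using Finsupp.induction_linear with
  | zero => simp only [map_zero]
  | add y z hy hz => simp only [map_add, hy, hz]
  | single m z =>
    obtain ⟨c, -, s, h⟩ := S.exists_stdForm_single_eq_smul_basisElt ρ m
    have hdiff : (p + (a, a) + s).1 - (p + (a, a) + s).2 = (p + s).1 - (p + s).2 := by
      simp only [Prod.fst_add, Prod.snd_add]; abel
    simp only [← smul_single_one m z, map_smul, h, redCoord_basisElt, hdiff]

lemma redCoord_mul_KK_diag_sub_one_mul (x y : S.D) (a : K0 R) :
    S.redCoord ρ (S.mulD x (S.mulD (S.KK (a, a) - S.one) y)) = 0 := by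
  obtain ⟨x, p, p', rfl⟩ := S.span x
  obtain ⟨y, q, q', rfl⟩ := S.span y
  change S.redCoord ρ (S.mulD (S.stdForm (p, p') x) (S.mulD _ (S.stdForm (q, q') y))) = 0
  rw [KK_diag_sub_one_mul_stdForm]
  induction y using Finsupp.induction_linear with
  | zero => simp only [map_zero, sub_zero]
  | add y z hy hz => simp only [map_add, add_sub_add_comm, hy, hz, add_zero]
  | single m z =>
    obtain ⟨M, rfl⟩ := FCls.exists_fcls_eq m
    rw [← smul_single_one]
    simp only [map_smul, map_sub, ← smul_sub, stdForm_mul_stdForm, ← add_assoc,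
      redCoord_stdForm_add_diag, sub_self, smul_zero]

lemma redIdeal_le_ker_redCoord : redIdeal S ≤ LinearMap.ker (S.redCoord ρ) := by
  refine Submodule.span_le.2 ?_
  rintro _ ⟨x, y, P, -, rfl⟩
  exact S.redCoord_mul_KK_diag_sub_one_mul ρ x y _

/-- The images in `DH_red(R)` of the elements `[C_A ⊕ C_B^†] ⋆ K_α`, which form a basis. -/
def redElt (i : (IsoA R × IsoA R) × K0 R) : DHred S := S.toRed (S.basisElt ρ (i.1, (i.2, 0)))

lemma toRed_basisElt (i : (IsoA R × IsoA R) × (K0 R × K0 R)) :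
    S.toRed (S.basisElt ρ i) = S.redElt ρ (i.1, i.2.1 - i.2.2) := by
  obtain ⟨i, α, β⟩ := i
  obtain ⟨P, Q, hP, hQ, rfl⟩ := K0.exists_eq_sub S.dd β
  have h : (α, K0.cls R Q - K0.cls R P) + (K0.cls R P, K0.cls R P) =
      (α - (K0.cls R Q - K0.cls R P), 0) + (K0.cls R Q, K0.cls R Q) := by
    ext
    · simp only [Prod.fst_add]; abel
    · simp only [Prod.snd_add]; abel
  simp only [redElt, basisElt]
  rw [← S.toRed_stdForm_add_diag hP, h, S.toRed_stdForm_add_diag hQ]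

theorem span_redElt : ⊤ ≤ Submodule.span ℂ (Set.range (S.redElt ρ)) := by
  have h : Submodule.map S.toRed (Submodule.span ℂ (Set.range (S.basisElt ρ))) ≤
      Submodule.span ℂ (Set.range (S.redElt ρ)) := by
    rw [Submodule.map_span_le]
    rintro _ ⟨i, rfl⟩
    exact Submodule.subset_span ⟨_, (S.toRed_basisElt ρ i).symm⟩
  rwa [top_le_iff.1 (S.span_basisElt ρ), Submodule.map_top,
    LinearMap.range_eq_top.2 S.toRed_surjective] at h

theorem linearIndependent_redElt : LinearIndependent ℂ (S.redElt ρ) := by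
  let g : DHred S →ₗ[ℂ] ((IsoA R × IsoA R) × K0 R →₀ ℂ) :=
    (redIdeal S).liftQ (S.redCoord ρ) (S.redIdeal_le_ker_redCoord ρ)
  have hg : g ∘ S.redElt ρ = fun i => single i 1 := by
    funext i
    exact (S.redCoord_basisElt ρ _).trans (by rw [sub_zero])
  exact .of_comp g (hg ▸ linearIndependent_single_one ℂ _)

/-- The basis of `DH_red(R)` formed by the images of the elements `[C_A ⊕ C_B^†] ⋆ K_α`. -/
def redBasis : Module.Basis ((IsoA R × IsoA R) × K0 R) ℂ (DHred S) :=
  .mk (S.linearIndependent_redElt ρ) (S.span_redElt ρ)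

theorem exists_toRed_stdForm_single (m : FCls R) :
    ∃ c : ℂ, c ≠ 0 ∧ ∃ s, ∀ p,
      S.toRed (S.stdForm p (single m 1)) = c • S.redBasis ρ (m.homology, p.1 - p.2 + s) := by
  obtain ⟨c, hc, s, h⟩ := S.exists_stdForm_single_eq_smul_basisElt ρ m
  refine ⟨c, hc, s.1 - s.2, fun p => ?_⟩
  rw [h, map_smul, toRed_basisElt, redBasis, Module.Basis.mk_apply, Prod.fst_add, Prod.snd_add,
    add_sub_add_comm]

end Reduced

/-! ### Triangularity of the multiplication map -/

section Triangularity

variable (ρ : ∀ a : IsoA R, TwoTermResolution (Quot.out a).1)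

lemma toRed_stdForm_mem_span {n : ℕ} {x : FCls R →₀ ℂ}
    (hx : ∀ m ∈ x.support, endCard (fc2c R m) < n) (p : K0 R × K0 R) :
    S.toRed (S.stdForm p x) ∈ Submodule.span ℂ (S.redBasis ρ '' {j | FCls.weight ρ j.1 < n}) := by
  rw [← x.sum_single, Finsupp.sum, map_sum, map_sum]
  refine Submodule.sum_mem _ fun m hm => ?_
  obtain ⟨c, -, s, h⟩ := S.exists_toRed_stdForm_single ρ m
  rw [← smul_single_one, map_smul, map_smul, h]
  refine Submodule.smul_mem _ _ (Submodule.smul_mem _ _ (Submodule.subset_span ⟨_, ?_, rfl⟩))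
  exact (FCls.weight_homology ρ S.dd m).trans_lt (hx m hm)

lemma exists_toRed_stdForm_mulH_single_sub_mem_span (m n : FCls R) :
    ∃ c : ℂ, c ≠ 0 ∧ ∃ s, ∀ p,
      S.toRed (S.stdForm p (S.mulH (single m 1) (single n 1))) -
          c • S.redBasis ρ ((m + n).homology, p.1 - p.2 + s) ∈
        Submodule.span ℂ (S.redBasis ρ '' {j | FCls.weight ρ j.1 < endCard (fc2c R (m + n))}) := by
  obtain ⟨c, hc, s, h⟩ := S.exists_toRed_stdForm_single ρ (m + n)
  set x := S.mulH (single m 1) (single n 1)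
  have hlead (p) : S.toRed (S.stdForm p (single (m + n) (x (m + n)))) =
      (x (m + n) * c) • S.redBasis ρ ((m + n).homology, p.1 - p.2 + s) := by
    rw [← smul_single_one, map_smul, map_smul, h, smul_smul]
  refine ⟨x (m + n) * c, mul_ne_zero (S.mulH_single_apply_add_ne_zero m n) hc, s, fun p => ?_⟩
  rw [← hlead, ← map_sub, ← map_sub]
  refine S.toRed_stdForm_mem_span ρ (x := x - _) (fun l hl => ?_) p
  rw [← erase_eq_sub_single, support_erase, Finset.mem_erase, mem_support_iff] at hl
  exact S.endCard_lt_of_mulH_single_apply_ne_zero hl.2 hl.1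

lemma exists_Eelt_eq_smul_stdForm (M : FCx R) :
    ∃ c : ℂ, c ≠ 0 ∧ ∃ p, Eelt S M.1 M.2 = c • S.stdForm p (single (fcls R M) 1) := by
  have h := S.KK_mul_stdForm M (-S.dd.cplus M.1, -S.dd.cminus M.1) 0
  rw [stdForm_zero] at h
  refine ⟨_ * _, mul_ne_zero (S.rpow_ne_zero _) (S.commScalar_ne_zero _ M), _,
    (congrArg _ h).trans (smul_smul _ _ _)⟩

lemma exists_Eelt_mul_KK_mul_Eelt_eq (M N : FCx R) :
    ∃ p, ∀ α, ∃ c : ℂ, c ≠ 0 ∧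
      S.mulD (Eelt S M.1 M.2) (S.mulD (S.KK (α, 0)) (Eelt S N.1 N.2)) =
        c • S.stdForm ((α, 0) + p) (S.mulH (single (fcls R M) 1) (single (fcls R N) 1)) := by
  obtain ⟨c, hc, p, hM⟩ := S.exists_Eelt_eq_smul_stdForm M
  obtain ⟨c', hc', p', hN⟩ := S.exists_Eelt_eq_smul_stdForm N
  refine ⟨p + p', fun α => ⟨c' * S.commScalar (α, 0) N * c * S.commScalar p N,
    mul_ne_zero (mul_ne_zero (mul_ne_zero hc' (S.commScalar_ne_zero _ N)) hc)
      (S.commScalar_ne_zero _ N), ?_⟩⟩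
  simp only [hM, hN, map_smul, LinearMap.smul_apply, KK_mul_stdForm, stdForm_mul_stdForm,
    smul_smul, add_left_comm p]
  congr 1
  ring

theorem exists_toRed_Eelt_mul_KK_mul_Eelt_sub_mem_span (M N : FCx R) :
    ∃ s, ∀ α, ∃ c : ℂ, c ≠ 0 ∧
      S.toRed (S.mulD (Eelt S M.1 M.2) (S.mulD (S.KK (α, 0)) (Eelt S N.1 N.2))) -
          c • S.redBasis ρ ((fcls R M + fcls R N).homology, α + s) ∈
        Submodule.span ℂ
          (S.redBasis ρ '' {j | FCls.weight ρ j.1 < endCard (fc2c R (fcls R M + fcls R N))}) := by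
  obtain ⟨p, hp⟩ := S.exists_Eelt_mul_KK_mul_Eelt_eq M N
  obtain ⟨c, hc, s, h⟩ :=
    S.exists_toRed_stdForm_mulH_single_sub_mem_span ρ (fcls R M) (fcls R N)
  refine ⟨p.1 - p.2 + s, fun α => ?_⟩
  obtain ⟨c', hc', hα⟩ := hp α
  have hs : ((α, 0) + p).1 - ((α, 0) + p).2 + s = α + (p.1 - p.2 + s) := by
    simp only [Prod.fst_add, Prod.snd_add]; abel
  refine ⟨c' * c, mul_ne_zero hc' hc, ?_⟩
  rw [hα, map_smul, mul_smul, ← smul_sub, ← hs]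
  exact Submodule.smul_mem _ _ (h _)

theorem exists_toRed_tripleProduct_sub_mem_span (a b : IsoA R) :
    ∃ s, ∀ α, ∃ c : ℂ, c ≠ 0 ∧
      S.toRed (S.mulD (Eelt S (ρ a).cx ((ρ a).finCx_cx (Quot.out a).2))
          (S.mulD (S.KK (α, 0))
            (Eelt S (dagger R (ρ b).cx) ((ρ b).finCx_cx (Quot.out b).2).dagger))) -
          c • S.redBasis ρ ((a, b), α + s) ∈
        Submodule.span ℂ (S.redBasis ρ '' {j | FCls.weight ρ j.1 < FCls.weight ρ (a, b)}) := by
  have h := S.exists_toRed_Eelt_mul_KK_mul_Eelt_sub_mem_span ρ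
    (.ofResolution (ρ a) (Quot.out a).2) (FCx.ofResolution (ρ b) (Quot.out b).2).dagger
  change ∃ s, ∀ α, ∃ c : ℂ, c ≠ 0 ∧
    _ - c • S.redBasis ρ ((FCls.ofPair ρ (a, b)).homology, α + s) ∈ _ at h
  rwa [FCls.homology_ofPair] at h

end Triangularity

end DHSetting

section TriMap

lemma tensorLift_finsuppLift_tmul_single {ι κ μ 𝕜 V : Type*} [CommRing 𝕜] [AddCommGroup V]
    [Module 𝕜 V] (F : ι → κ → μ → V) (a : ι) (b : κ) (c : μ) :
    TensorProduct.lift (Finsupp.lift ((κ →₀ 𝕜) ⊗[𝕜] (μ →₀ 𝕜) →ₗ[𝕜] V) 𝕜 ι fun a =>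
        TensorProduct.lift (Finsupp.lift ((μ →₀ 𝕜) →ₗ[𝕜] V) 𝕜 κ fun b =>
          Finsupp.lift V 𝕜 μ (F a b)))
      (Finsupp.single a 1 ⊗ₜ (Finsupp.single b 1 ⊗ₜ Finsupp.single c 1)) = F a b c := by
  simp [Finsupp.lift_apply]

lemma triMap_tmul_single (S : DHSetting k R) {rP rQ : R → R} {rf : ∀ C : R, rP C ⟶ rQ C}
    (hfc : ∀ C : R, IsFinHom R C → FinCx R (Z2Cx.Cf R (rf C)))
    (hfcd : ∀ C : R, IsFinHom R C → FinCx R (Z2Cx.dagger R (Z2Cx.Cf R (rf C))))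
    (a b : IsoA R) (α : K0 R) :
    triMap S rP rQ rf hfc hfcd
        (Finsupp.single a 1 ⊗ₜ (Finsupp.single α 1 ⊗ₜ Finsupp.single b 1)) =
      S.toRed (S.mulD (Eelt S _ (hfc (Quot.out a).1 (Quot.out a).2))
        (S.mulD (S.KK (α, 0)) (Eelt S _ (hfcd (Quot.out b).1 (Quot.out b).2)))) :=
  tensorLift_finsuppLift_tmul_single _ a α b

end TriMap

theorem stmt15_general (S : DHSetting k R)
    (rP rQ : R → R) (rf : ∀ C : R, rP C ⟶ rQ C) (rπ : ∀ C : R, rQ C ⟶ C)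
    (hres : ∀ C : R, IsFinHom R C → Projective (rP C) ∧ Projective (rQ C) ∧
      ∃ w : rf C ≫ rπ C = 0, (ShortComplex.mk (rf C) (rπ C) w).ShortExact)
    (hfc : ∀ C : R, IsFinHom R C → FinCx R (Z2Cx.Cf R (rf C)))
    (hfcd : ∀ C : R, IsFinHom R C → FinCx R (Z2Cx.dagger R (Z2Cx.Cf R (rf C)))) :
    Function.Bijective (triMap S rP rQ rf hfc hfcd) := by
  let ρ (a : IsoA R) : TwoTermResolution (Quot.out a).1 :=
    have h := hres _ (Quot.out a).2
    ⟨_, _, h.1, h.2.1, rf _, rπ _, h.2.2.choose, h.2.2.choose_spec⟩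
  choose s hs using S.exists_toRed_tripleProduct_sub_mem_span ρ
  let e : IsoA R × K0 R × IsoA R ≃ (IsoA R × IsoA R) × K0 R :=
    { toFun i := ((i.1, i.2.2), i.2.1 + s i.1 i.2.2)
      invFun j := (j.1.1, j.2 - s j.1.1 j.1.2, j.1.2)
      left_inv i := by simp
      right_inv j := by simp }
  let b : Module.Basis (IsoA R × K0 R × IsoA R) ℂ _ :=
    (Finsupp.basisSingleOne (R := ℂ)).tensorProduct
      ((Finsupp.basisSingleOne (R := ℂ)).tensorProduct (Finsupp.basisSingleOne (R := ℂ)))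
  have htri (i) : ∃ c : ℂ, c ≠ 0 ∧ triMap S rP rQ rf hfc hfcd (b i) - c • S.redBasis ρ (e i) ∈
      Submodule.span ℂ (S.redBasis ρ '' {j | FCls.weight ρ j.1 < FCls.weight ρ (e i).1}) := by
    obtain ⟨c, hc, h⟩ := hs i.1 i.2.2 i.2.1
    refine ⟨c, hc, ?_⟩
    rw [Module.Basis.tensorProduct_apply', Module.Basis.tensorProduct_apply']
    simp only [Finsupp.coe_basisSingleOne]
    rw [triMap_tmul_single]
    exact h
  exact ⟨injective_of_triangular b _ _ e.injective htri,
    surjective_of_triangular b _ _ e.surjective htri⟩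

theorem stmt15 (hH : Hereditary k R) (hc : CondC R) (hd : CondD R) (he : CondE R)
    (S : DHSetting k R)
    -- a fixed choice of projective resolution `0 → P_C → Q_C → C → 0` for each object
    (rP rQ : R → R) (rf : ∀ C : R, rP C ⟶ rQ C) (rπ : ∀ C : R, rQ C ⟶ C)
    (hres : ∀ C : R, IsFinHom R C → Projective (rP C) ∧ Projective (rQ C) ∧
      ∃ w : rf C ≫ rπ C = 0, (ShortComplex.mk (rf C) (rπ C) w).ShortExact)
    (hfc : ∀ C : R, IsFinHom R C → FinCx R (Z2Cx.Cf R (rf C)))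
    (hfcd : ∀ C : R, IsFinHom R C → FinCx R (Z2Cx.dagger R (Z2Cx.Cf R (rf C)))) :
    Function.Bijective (triMap S rP rQ rf hfc hfcd) :=
  stmt15_general S rP rQ rf rπ hres hfc hfcd

end
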